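/- arXiv:1902.08064 — 2 statements merged into one kernel-verified Lean document; each statement's English description precedes it below -/
import Mathlib

section
/- Assume λ, μ, ν, b ∈ ℂ and ℓ, m ∈ ℕ satisfy ℓ + m even, Re λ > −1/2, Re μ > −1/2, Re ν > 0, and Re b > −1. Then (m − ℓ)/2 is an integer and ∫_{−1}^1 ∫_{−1}^1 ∫_0^1 |s − t√y|^{2ν} C_ℓ^λ(s) C_m^μ(t) y^{μ+m/2}(1−y)^b (1−s²)^{λ−1/2} (1−t²)^{μ−1/2} dy ds dt = c · (2λ)_ℓ (2μ)_m (−ν)_{(ℓ+m)/2} Γ(λ+1/2) Γ(μ+1/2) Γ(ν+1/2) Γ(λ+μ+2ν+b+2) Γ(b+1) / (Γ(λ+μ+ν+b+(ℓ+m)/2+2) Γ(λ+ν+(ℓ−m)/2+1) Γ(μ+ν+b−(ℓ−m)/2+2)), where c = π^{1/2} (−1)^{(m−ℓ)/2} / (ℓ! m!). -/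
open MeasureTheory Filter intervalIntegral

/-- The Gegenbauer (ultraspherical) polynomial `C_n^λ(x)`. -/
noncomputable def gegenbauer (l : ℂ) (n : ℕ) (x : ℂ) : ℂ :=
  ∑ k ∈ Finset.range (n / 2 + 1),
    ((-1 : ℂ) ^ k * (ascPochhammer ℂ (n - k)).eval l /
      ((Nat.factorial k : ℂ) * (Nat.factorial (n - 2 * k) : ℂ))) * (2 * x) ^ (n - 2 * k)

/-!
Write `W_λ` for the Gegenbauer weight. By Rodrigues' formula `C_n^λ` is a multiple of a polynomial
`Q_n^λ` with `W_λ Q_n^λ = (-1)^n D^n W_{λ+n}`, so all moments of `Q_n^λ W_λ` are explicit. Comparing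
moments, the `t`- and `y`-integrals of `f(t√y) Q_m^μ(t) y^{μ+m/2} (1-y)^b W_μ(t)` reduce, for every
continuous `f`, to a single integral of `f` against a multiple of `Q_m^{μ+b+1} W_{μ+b+1}`.

It remains to integrate `|s - x|^{2ν}` against two Rodrigues polynomials and their weights. For
large `Re ν`, integrating by parts `ℓ + m` times moves all derivatives onto the kernel and leaves
the same integral without polynomials, with shifted parameters. That one equals a Gamma quotient,
because both satisfy one recurrence in `λ` and agree asymptotically as `λ → ∞` along the integers.
Both sides are holomorphic in `ν`, so the formula extends to `Re ν > 0`.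
-/

open Polynomial Topology Set

section Parameters

variable {l : ℂ}

theorem one_half_re : (1 / 2 : ℂ).re = 1 / 2 := by norm_num

theorem add_one_half_re_pos (hl : -(1 / 2 : ℝ) < l.re) : 0 < (l + 1 / 2).re := by
  rw [Complex.add_re, one_half_re]; linarith

theorem add_one_half_ne_zero (hl : -(1 / 2 : ℝ) < l.re) : l + 1 / 2 ≠ 0 :=
  Complex.ne_zero_of_re_pos (add_one_half_re_pos hl)

theorem neg_half_lt_add_natCast_re (hl : -(1 / 2 : ℝ) < l.re) (n : ℕ) :
    -(1 / 2 : ℝ) < (l + n).re := by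
  rw [Complex.add_re, Complex.natCast_re]; linarith [n.cast_nonneg (α := ℝ)]

theorem half_lt_add_one_re (hl : -(1 / 2 : ℝ) < l.re) : 1 / 2 < (l + 1).re := by
  rw [Complex.add_re, Complex.one_re]; linarith

theorem neg_half_lt_add_one_re (hl : -(1 / 2 : ℝ) < l.re) : -(1 / 2 : ℝ) < (l + 1).re := by
  linarith [half_lt_add_one_re hl]

theorem neg_half_lt_add_add_one_re {b : ℂ} (hl : -(1 / 2 : ℝ) < l.re) (hb : -1 < b.re) :
    -(1 / 2 : ℝ) < (l + b + 1).re := by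
  rw [Complex.add_re, Complex.add_re, Complex.one_re]; linarith

end Parameters

section Weight

variable {l : ℂ}

/-- The orthogonality weight `(1 - x²)^{λ - 1/2}` of the Gegenbauer polynomials `C_n^λ`. -/
noncomputable def gegenbauerWeight (l : ℂ) (x : ℝ) : ℂ := ((1 - x ^ 2 : ℝ) : ℂ) ^ (l - 1 / 2 : ℂ)

theorem gegenbauerWeight_neg (l : ℂ) (x : ℝ) : gegenbauerWeight l (-x) = gegenbauerWeight l x := by
  rw [gegenbauerWeight, gegenbauerWeight, neg_sq]

theorem gegenbauerWeight_add_one_of_sq_eq_one (hl : -(1 / 2 : ℝ) < l.re) {x : ℝ}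
    (hx : x ^ 2 = 1) : gegenbauerWeight (l + 1) x = 0 := by
  rw [gegenbauerWeight, hx, sub_self, Complex.ofReal_zero, Complex.zero_cpow]
  convert! add_one_half_ne_zero hl using 1; ring

theorem gegenbauerWeight_add_one (hl : -(1 / 2 : ℝ) < l.re) (x : ℝ) :
    gegenbauerWeight (l + 1) x = (1 - (x : ℂ) ^ 2) * gegenbauerWeight l x := by
  rcases eq_or_ne (x ^ 2) 1 with hx | hx
  · rw [gegenbauerWeight_add_one_of_sq_eq_one hl hx, ← Complex.ofReal_pow, hx, Complex.ofReal_one,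
      sub_self, zero_mul]
  · have h : ((1 - x ^ 2 : ℝ) : ℂ) ≠ 0 := by exact_mod_cast sub_ne_zero.2 hx.symm
    rw [gegenbauerWeight, gegenbauerWeight, show l + 1 - 1 / 2 = 1 + (l - 1 / 2) by ring,
      Complex.cpow_add _ _ h, Complex.cpow_one]
    push_cast; rfl

theorem continuous_gegenbauerWeight (hl : 1 / 2 < l.re) : Continuous (gegenbauerWeight l) := by
  refine (Complex.continuous_ofReal_cpow_const ?_).comp
    (by fun_prop : Continuous fun x : ℝ => 1 - x ^ 2)
  rw [Complex.sub_re, one_half_re]; linarith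

theorem hasDerivAt_gegenbauerWeight_add_one (hl : -(1 / 2 : ℝ) < l.re) {x : ℝ} (hx : x ^ 2 ≠ 1) :
    HasDerivAt (gegenbauerWeight (l + 1)) (-((2 * l + 1) * x * gegenbauerWeight l x)) x := by
  have hsq : HasDerivAt (fun y : ℝ => 1 - y ^ 2) (-(2 * x)) x := by
    simpa using (hasDerivAt_pow 2 x).const_sub 1
  have hexp : l + 1 - 1 / 2 = l + 1 / 2 := by ring
  have hpow := hasDerivAt_ofReal_cpow_const (r := l + 1 - 1 / 2) (sub_ne_zero.2 hx.symm)
    (hexp ▸ add_one_half_ne_zero hl)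
  convert! hpow.scomp x hsq using 1
  rw [gegenbauerWeight, Complex.real_smul, show l + 1 - 1 / 2 - 1 = l - 1 / 2 by ring]
  push_cast; ring

-- The substitution `x = 2y - 1` turns the weight into a beta density.
theorem gegenbauerWeight_two_mul_sub_one (l : ℂ) {y : ℝ} (hy : y ∈ Icc (0 : ℝ) 1) :
    gegenbauerWeight l (2 * y - 1) = 2 ^ (2 * l - 1) *
      ((y : ℂ) ^ (l + 1 / 2 - 1) * (1 - (y : ℂ)) ^ (l + 1 / 2 - 1)) := by
  have hy' : 0 ≤ 1 - y := sub_nonneg.2 hy.2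
  have hfactor : ((1 - (2 * y - 1) ^ 2 : ℝ) : ℂ) = (2 * 2 : ℝ) * ((y * (1 - y) : ℝ) : ℂ) := by
    push_cast; ring
  have htwo : ((2 * 2 : ℝ) : ℂ) ^ (l - 1 / 2) = 2 ^ (2 * l - 1) := by
    rw [Complex.ofReal_mul, Complex.mul_cpow_ofReal_nonneg zero_le_two zero_le_two,
      Complex.ofReal_ofNat, ← Complex.cpow_add _ _ two_ne_zero]
    congr 1; ring
  rw [gegenbauerWeight, hfactor, Complex.mul_cpow_ofReal_nonneg (by norm_num) (mul_nonneg hy.1 hy'),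
    htwo, Complex.ofReal_mul, Complex.mul_cpow_ofReal_nonneg hy.1 hy',
    show l + 1 / 2 - 1 = l - 1 / 2 by ring, Complex.ofReal_sub, Complex.ofReal_one]

theorem intervalIntegrable_gegenbauerWeight (hl : -(1 / 2 : ℝ) < l.re) :
    IntervalIntegrable (gegenbauerWeight l) volume (-1) 1 := by
  have hl' := add_one_half_re_pos hl
  have hbeta : IntervalIntegrable (fun y : ℝ => gegenbauerWeight l (2 * y - 1)) volume 0 1 := by
    refine ((Complex.betaIntegral_convergent hl' hl').const_mul (2 ^ (2 * l - 1))).congr ?_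
    intro y hy
    rw [uIoc_of_le zero_le_one] at hy
    exact (gegenbauerWeight_two_mul_sub_one l (Ioc_subset_Icc_self hy)).symm
  have hsubst := (hbeta.comp_mul_left (c := 1 / 2)).comp_add_right 1
  have harg : ∀ x : ℝ, 2 * (1 / 2 * (x + 1)) - 1 = x := fun x => by ring
  norm_num only [harg] at hsubst
  exact hsubst

theorem integral_gegenbauerWeight (hl : -(1 / 2 : ℝ) < l.re) :
    ∫ x in (-1 : ℝ)..1, gegenbauerWeight l x =
      (√Real.pi : ℂ) * Complex.Gamma (l + 1 / 2) / Complex.Gamma (l + 1) := by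
  have hl' := add_one_half_re_pos hl
  have hbeta : ∫ y in (0 : ℝ)..1, gegenbauerWeight l (2 * y - 1) =
      2 ^ (2 * l - 1) * Complex.betaIntegral (l + 1 / 2) (l + 1 / 2) := by
    rw [Complex.betaIntegral, ← intervalIntegral.integral_const_mul]
    refine integral_congr fun y hy => ?_
    rw [uIcc_of_le zero_le_one] at hy
    exact gegenbauerWeight_two_mul_sub_one l hy
  have hsubst := integral_comp_mul_sub (a := 0) (b := 1) (gegenbauerWeight l) two_ne_zero 1
  have hdup := Complex.Gamma_mul_Gamma_add_half (l + 1 / 2)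
  have hpow : (2 : ℂ) ^ (1 - 2 * (l + 1 / 2)) * 2 ^ (2 * l - 1) = 1 / 2 := by
    rw [← Complex.cpow_add _ _ two_ne_zero, show 1 - 2 * (l + 1 / 2) + (2 * l - 1) = -1 by ring,
      Complex.cpow_neg_one, one_div]
  have hdouble : Complex.Gamma (l + 1 / 2 + (l + 1 / 2)) ≠ 0 :=
    Complex.Gamma_ne_zero_of_re_pos (by rw [Complex.add_re]; linarith)
  have hl1 : Complex.Gamma (l + 1) ≠ 0 :=
    Complex.Gamma_ne_zero_of_re_pos (by linarith [half_lt_add_one_re hl])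
  rw [hbeta, Complex.betaIntegral_eq_Gamma_mul_div _ _ hl' hl', Complex.real_smul] at hsubst
  rw [show l + 1 / 2 + 1 / 2 = l + 1 by ring, two_mul (l + 1 / 2)] at hdup
  norm_num only at hsubst
  have hcancel : Complex.Gamma (l + 1 / 2) * Complex.Gamma (l + 1 / 2) /
      Complex.Gamma (l + 1 / 2 + (l + 1 / 2)) * Complex.Gamma (l + 1) =
      Complex.Gamma (l + 1 / 2) * 2 ^ (1 - (l + 1 / 2 + (l + 1 / 2))) * √Real.pi := by
    rw [div_mul_eq_mul_div, mul_assoc, hdup, div_eq_iff hdouble]; ring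
  rw [two_mul (l + 1 / 2)] at hpow
  push_cast at hsubst
  rw [eq_div_iff hl1]
  linear_combination -2 * Complex.Gamma (l + 1) * hsubst + 2 * 2 ^ (2 * l - 1) * hcancel +
    2 * Complex.Gamma (l + 1 / 2) * √Real.pi * hpow

end Weight

section WeightedIntegral

variable {l : ℂ} {f g : ℝ → ℂ}

/-- The integral `∫_{-1}^1 f(x) (1 - x²)^{λ - 1/2} dx` of `f` against the Gegenbauer weight. -/
noncomputable def weightedIntegral (l : ℂ) (f : ℝ → ℂ) : ℂ :=
  ∫ x in (-1 : ℝ)..1, f x * gegenbauerWeight l x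

theorem intervalIntegrable_mul_gegenbauerWeight (hl : -(1 / 2 : ℝ) < l.re) (hf : Continuous f) :
    IntervalIntegrable (fun x => f x * gegenbauerWeight l x) volume (-1) 1 :=
  (intervalIntegrable_gegenbauerWeight hl).continuousOn_mul hf.continuousOn

theorem weightedIntegral_const_mul (l c : ℂ) (f : ℝ → ℂ) :
    weightedIntegral l (fun x => c * f x) = c * weightedIntegral l f := by
  simp only [weightedIntegral, mul_assoc, intervalIntegral.integral_const_mul]

theorem weightedIntegral_add (hl : -(1 / 2 : ℝ) < l.re) (hf : Continuous f) (hg : Continuous g) :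
    weightedIntegral l (fun x => f x + g x) = weightedIntegral l f + weightedIntegral l g := by
  simp only [weightedIntegral, add_mul]
  exact intervalIntegral.integral_add (intervalIntegrable_mul_gegenbauerWeight hl hf)
    (intervalIntegrable_mul_gegenbauerWeight hl hg)

theorem weightedIntegral_comp_neg (l : ℂ) (f : ℝ → ℂ) :
    weightedIntegral l (fun x => f (-x)) = weightedIntegral l f := by
  have h := intervalIntegral.integral_comp_neg (a := -1) (b := 1)
    (fun x => f x * gegenbauerWeight l x)
  simpa only [weightedIntegral, gegenbauerWeight_neg, neg_neg] using h

theorem weightedIntegral_add_one (hl : -(1 / 2 : ℝ) < l.re) (f : ℝ → ℂ) :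
    weightedIntegral (l + 1) f = weightedIntegral l (fun x => (1 - (x : ℂ) ^ 2) * f x) := by
  simp only [weightedIntegral, gegenbauerWeight_add_one hl]
  congr! 2; ring

theorem weightedIntegral_deriv (hl : -(1 / 2 : ℝ) < l.re) (hf : ContDiff ℝ 1 f) :
    weightedIntegral (l + 1) (deriv f) =
      weightedIntegral l (fun x => (2 * l + 1) * x * f x) := by
  have hl' := half_lt_add_one_re hl
  have hderiv := hf.continuous_deriv le_rfl
  have hfc := hf.continuous
  have hint₁ := intervalIntegrable_mul_gegenbauerWeight (neg_half_lt_add_one_re hl) hderiv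
  have hint₂ : IntervalIntegrable
      (fun x : ℝ => (2 * l + 1) * x * f x * gegenbauerWeight l x) volume (-1) 1 :=
    intervalIntegrable_mul_gegenbauerWeight hl (by fun_prop)
  have hprod : ∀ x ∈ Ioo (-1 : ℝ) 1, HasDerivAt (fun x => f x * gegenbauerWeight (l + 1) x)
      (deriv f x * gegenbauerWeight (l + 1) x -
        (2 * l + 1) * x * f x * gegenbauerWeight l x) x := by
    intro x hx
    have hx' : x ^ 2 ≠ 1 := by nlinarith [hx.1, hx.2]
    convert! (hf.differentiable one_ne_zero x).hasDerivAt.mul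
      (hasDerivAt_gegenbauerWeight_add_one hl hx') using 1
    ring
  have hftc := integral_eq_sub_of_hasDerivAt_of_le (by norm_num)
    (f := fun x => f x * gegenbauerWeight (l + 1) x)
    (hfc.mul (continuous_gegenbauerWeight hl')).continuousOn hprod (hint₁.sub hint₂)
  rwa [intervalIntegral.integral_sub hint₁ hint₂, gegenbauerWeight_add_one_of_sq_eq_one hl
    (by norm_num), gegenbauerWeight_add_one_of_sq_eq_one hl (by norm_num), mul_zero, mul_zero,
    sub_zero, sub_eq_zero] at hftc

theorem weightedIntegral_pow_of_odd (l : ℂ) {k : ℕ} (hk : Odd k) :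
    weightedIntegral l (fun x => (x : ℂ) ^ k) = 0 := by
  have h := weightedIntegral_comp_neg l (fun x => (x : ℂ) ^ k)
  simp only [Complex.ofReal_neg, hk.neg_pow, neg_eq_neg_one_mul (_ ^ k),
    weightedIntegral_const_mul] at h
  rwa [← neg_eq_neg_one_mul, neg_eq_self] at h

theorem weightedIntegral_pow_add_two (hl : -(1 / 2 : ℝ) < l.re) (k : ℕ) :
    (2 * l + 1) * weightedIntegral l (fun x => (x : ℂ) ^ (k + 2)) =
      (k + 1) * weightedIntegral (l + 1) (fun x => (x : ℂ) ^ k) := by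
  have hd : ∀ x : ℝ, HasDerivAt (fun x : ℝ => (x : ℂ) ^ (k + 1)) ((k + 1) * (x : ℂ) ^ k) x := by
    intro x
    simpa using (hasDerivAt_pow (k + 1) (x : ℂ)).comp_ofReal
  have h := weightedIntegral_deriv hl (f := fun x => (x : ℂ) ^ (k + 1))
    (Complex.ofRealCLM.contDiff.pow (k + 1))
  rw [deriv_eq hd, weightedIntegral_const_mul] at h
  rw [h, ← weightedIntegral_const_mul]
  congr 1; ext x; ring

theorem weightedIntegral_pow_two_mul (hl : -(1 / 2 : ℝ) < l.re) (q : ℕ) :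
    weightedIntegral l (fun x => (x : ℂ) ^ (2 * q)) =
      (√Real.pi : ℂ) * (ascPochhammer ℂ q).eval (1 / 2) * Complex.Gamma (l + 1 / 2) /
        Complex.Gamma (l + q + 1) := by
  induction q generalizing l with
  | zero => simpa [weightedIntegral] using integral_gegenbauerWeight hl
  | succ q ih =>
    have hrec := weightedIntegral_pow_add_two hl (2 * q)
    have hne : 2 * l + 1 ≠ 0 := fun h => add_one_half_ne_zero hl (by linear_combination h / 2)
    rw [ih (neg_half_lt_add_one_re hl), show l + 1 + 1 / 2 = l + 1 / 2 + 1 by ring,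
      Complex.Gamma_add_one _ (add_one_half_ne_zero hl)] at hrec
    apply mul_left_cancel₀ hne
    rw [mul_add_one, hrec, ascPochhammer_succ_eval]
    push_cast
    rw [show l + 1 + q + 1 = l + (q + 1) + 1 by ring]
    ring

end WeightedIntegral

section Rodrigues

/-- The polynomials in Rodrigues' formula for the Gegenbauer weight: writing `W_λ` for the weight,
`W_λ Q_n^λ = (-1)^n dⁿ/dxⁿ W_{λ + n}`. The recursion spells out one derivative. -/
noncomputable def rodriguesPoly : ℕ → ℂ → ℂ[X]
  | 0, _ => 1
  | n + 1, l => C (2 * l + 1) * X * rodriguesPoly n (l + 1)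
      - (1 - X ^ 2) * derivative (rodriguesPoly n (l + 1))

theorem hasDerivAt_eval_ofReal (p : ℂ[X]) (x : ℝ) :
    HasDerivAt (fun x : ℝ => p.eval (x : ℂ)) ((derivative p).eval (x : ℂ)) x :=
  (p.hasDerivAt (x : ℂ)).comp_ofReal

theorem contDiff_eval_ofReal (p : ℂ[X]) {n : ℕ∞} :
    ContDiff ℝ n (fun x : ℝ => p.eval (x : ℂ)) :=
  (p.contDiff_aeval (𝕜 := ℂ) n).restrict_scalars ℝ |>.comp Complex.ofRealCLM.contDiff

theorem iteratedDeriv_eval_ofReal (p : ℂ[X]) (n : ℕ) :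
    iteratedDeriv n (fun x : ℝ => p.eval (x : ℂ)) =
      fun x : ℝ => (derivative^[n] p).eval (x : ℂ) := by
  induction n generalizing p with
  | zero => rfl
  | succ n ih =>
    rw [iteratedDeriv_succ', deriv_eq (hasDerivAt_eval_ofReal p), ih, Function.iterate_succ_apply]

theorem weightedIntegral_mul_rodriguesPoly {l : ℂ} (hl : -(1 / 2 : ℝ) < l.re) {n : ℕ}
    {f : ℝ → ℂ} (hf : ContDiff ℝ n f) :
    weightedIntegral l (fun x => f x * (rodriguesPoly n l).eval (x : ℂ)) =
      weightedIntegral (l + n) (iteratedDeriv n f) := by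
  induction n generalizing l f with
  | zero => simp [rodriguesPoly]
  | succ n ih =>
    have hl' := neg_half_lt_add_one_re hl
    have hf1 : ContDiff ℝ 1 f := hf.of_le (by exact_mod_cast Nat.le_add_left 1 n)
    have hderiv : ContDiff ℝ n (deriv f) := (contDiff_succ_iff_deriv.1 (by exact_mod_cast hf)).2.2
    set Q := rodriguesPoly n (l + 1)
    have hprod : deriv (fun x : ℝ => f x * Q.eval (x : ℂ)) =
        fun x : ℝ => deriv f x * Q.eval (x : ℂ) + f x * (derivative Q).eval (x : ℂ) :=
      deriv_eq fun x => (hf1.differentiable one_ne_zero x).hasDerivAt.mul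
        (hasDerivAt_eval_ofReal Q x)
    have hibp := weightedIntegral_deriv hl (hf1.mul (contDiff_eval_ofReal Q (n := 1)))
    have hfc := hf.continuous
    have hfc' := hderiv.continuous
    have hsplit : weightedIntegral l (fun x : ℝ => (2 * l + 1) * x * (f x * Q.eval (x : ℂ))) =
        weightedIntegral l (fun x => f x * (rodriguesPoly (n + 1) l).eval (x : ℂ)) +
          weightedIntegral (l + 1) (fun x => f x * (derivative Q).eval (x : ℂ)) := by
      rw [weightedIntegral_add_one hl, ← weightedIntegral_add hl (by fun_prop) (by fun_prop)]
      congr 1; ext x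
      simp only [rodriguesPoly, eval_sub, eval_mul, eval_C, eval_X, eval_pow, eval_one]
      ring
    rw [hprod, weightedIntegral_add hl' (by fun_prop) (by fun_prop), hsplit, add_left_inj,
      ih hl' hderiv, ← iteratedDeriv_succ'] at hibp
    rw [← hibp, Nat.cast_succ, add_right_comm, add_assoc l]

end Rodrigues

theorem eval_ascPochhammer_succ_left {R : Type*} [CommSemiring R] (n : ℕ) (x : R) :
    (ascPochhammer R (n + 1)).eval x = x * (ascPochhammer R n).eval (x + 1) := by
  rw [ascPochhammer_succ_left, eval_mul, eval_X, eval_comp, eval_add, eval_X, eval_one]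

section Gegenbauer

/-- The coefficient of `(2x)^{n - 2k}` in `C_n^λ(x)`, with value `0` when `n < 2k`. -/
noncomputable def gegenbauerCoeff (l : ℂ) (n k : ℕ) : ℂ :=
  if 2 * k ≤ n then
    (-1) ^ k * (ascPochhammer ℂ (n - k)).eval l / (k.factorial * (n - 2 * k).factorial)
  else 0

/-- The Gegenbauer polynomial `C_n^λ` as an element of `ℂ[X]`. -/
noncomputable def gegenbauerPoly (l : ℂ) (n : ℕ) : ℂ[X] :=
  ∑ k ∈ Finset.range (n / 2 + 1), C (gegenbauerCoeff l n k) * (C 2 * X) ^ (n - 2 * k)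

theorem gegenbauerCoeff_eq_zero (l : ℂ) {n k : ℕ} (h : n < 2 * k) : gegenbauerCoeff l n k = 0 :=
  if_neg (not_le.2 h)

theorem gegenbauerCoeff_two_mul_add (l : ℂ) (k j : ℕ) :
    gegenbauerCoeff l (2 * k + j) k =
      (-1) ^ k * (ascPochhammer ℂ (k + j)).eval l / (k.factorial * j.factorial) := by
  rw [gegenbauerCoeff, if_pos (Nat.le_add_right _ _), show 2 * k + j - k = k + j by omega,
    Nat.add_sub_cancel_left]

theorem eval_gegenbauerPoly (l : ℂ) (n : ℕ) (x : ℂ) :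
    (gegenbauerPoly l n).eval x = gegenbauer l n x := by
  rw [gegenbauerPoly, gegenbauer, eval_finsetSum]
  refine Finset.sum_congr rfl fun k hk => ?_
  have hk' : 2 * k ≤ n := by have := Finset.mem_range.1 hk; omega
  rw [gegenbauerCoeff, if_pos hk', eval_mul, eval_C, eval_pow, eval_mul, eval_C, eval_X]

theorem gegenbauerPoly_eq_sum_range (l : ℂ) {n N : ℕ} (hN : n / 2 < N) :
    gegenbauerPoly l n =
      ∑ k ∈ Finset.range N, C (gegenbauerCoeff l n k) * (C 2 * X) ^ (n - 2 * k) := by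
  refine Finset.sum_subset (Finset.range_mono hN) fun k _ hk => ?_
  have hk' : n < 2 * k := by have := Finset.mem_range.not.1 hk; omega
  rw [gegenbauerCoeff_eq_zero l hk', C_0, zero_mul]

theorem gegenbauerCoeff_succ_mul (l : ℂ) (n k : ℕ) :
    ((n + 1 - 2 * k : ℕ) : ℂ) * gegenbauerCoeff l (n + 1) k = l * gegenbauerCoeff (l + 1) n k := by
  rcases lt_or_ge n (2 * k) with h | h
  · rw [gegenbauerCoeff_eq_zero _ h, Nat.sub_eq_zero_of_le h, Nat.cast_zero, zero_mul, mul_zero]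
  · obtain ⟨j, rfl⟩ := Nat.exists_eq_add_of_le h
    rw [add_assoc, Nat.add_sub_cancel_left, gegenbauerCoeff_two_mul_add,
      gegenbauerCoeff_two_mul_add, ← add_assoc, eval_ascPochhammer_succ_left, Nat.factorial_succ]
    have := Nat.cast_add_one_ne_zero (R := ℂ) j
    push_cast
    field_simp

theorem gegenbauerCoeff_mul_eq_succ (l : ℂ) (k j : ℕ) :
    (j : ℂ) * ((j - 1 : ℕ) : ℂ) * gegenbauerCoeff l (2 * k + j) k =
      -((k + 1) * (l + k + j - 1)) * gegenbauerCoeff l (2 * k + j) (k + 1) := by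
  rcases lt_or_ge j 2 with h | h
  · rw [gegenbauerCoeff_eq_zero l (k := k + 1) (by omega)]
    interval_cases j <;> simp
  · obtain ⟨i, rfl⟩ := Nat.exists_eq_add_of_le' h
    rw [gegenbauerCoeff_two_mul_add, show 2 * k + (i + 2) = 2 * (k + 1) + i by ring,
      gegenbauerCoeff_two_mul_add, show k + (i + 2) = k + 1 + i + 1 by ring,
      ascPochhammer_succ_eval, Nat.factorial_succ (i + 1), Nat.factorial_succ i,
      Nat.factorial_succ k, show i + 2 - 1 = i + 1 by omega]
    have h₁ := Nat.cast_add_one_ne_zero (R := ℂ) i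
    have h₂ : (i : ℂ) + 1 + 1 ≠ 0 := by exact_mod_cast Nat.succ_ne_zero (i + 1)
    push_cast
    field_simp
    ring

theorem derivative_two_mul_X_pow (j : ℕ) :
    derivative ((C 2 * X : ℂ[X]) ^ j) = C (2 * (j : ℂ)) * (C 2 * X) ^ (j - 1) := by
  rw [derivative_pow, derivative_C_mul, derivative_X, C_mul]; ring

theorem derivative_gegenbauerPoly_succ (l : ℂ) (n : ℕ) :
    derivative (gegenbauerPoly l (n + 1)) = C (2 * l) * gegenbauerPoly (l + 1) n := by
  rw [gegenbauerPoly_eq_sum_range l (N := n + 2) (by omega),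
    gegenbauerPoly_eq_sum_range (l + 1) (N := n + 2) (by omega), derivative_sum, Finset.mul_sum]
  refine Finset.sum_congr rfl fun k _ => ?_
  rw [derivative_C_mul, derivative_two_mul_X_pow, show n + 1 - 2 * k - 1 = n - 2 * k by omega,
    ← mul_assoc, ← mul_assoc, ← C_mul, ← C_mul]
  congr 2
  linear_combination 2 * gegenbauerCoeff_succ_mul l n k

/-- The amount by which the `k`-th and later terms of `C_n^λ` fail to satisfy the Gegenbauer
differential equation; used to sum that equation by telescoping. -/
noncomputable def gegenbauerDefect (l : ℂ) (n : ℕ) (x : ℂ) (k : ℕ) : ℂ :=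
  4 * k * (l + n - k) * gegenbauerCoeff l n k * (2 * x) ^ (n - 2 * k)

theorem gegenbauerDefect_sub_succ (l : ℂ) (n k : ℕ) (x : ℂ) :
    gegenbauerDefect l n x k - gegenbauerDefect l n x (k + 1) =
      gegenbauerCoeff l n k * (n * (n + 2 * l) * (2 * x) ^ (n - 2 * k) -
        ((2 * l + 1) * x * (2 * (n - 2 * k : ℕ) * (2 * x) ^ (n - 2 * k - 1)) -
          (1 - x ^ 2) * (2 * (n - 2 * k : ℕ) *
            (2 * (n - 2 * k - 1 : ℕ) * (2 * x) ^ (n - 2 * k - 1 - 1))))) := by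
  rcases lt_or_ge n (2 * k) with h | h
  · rw [gegenbauerDefect, gegenbauerDefect, gegenbauerCoeff_eq_zero l h,
      gegenbauerCoeff_eq_zero l (k := k + 1) (by omega)]
    ring
  · obtain ⟨j, rfl⟩ := Nat.exists_eq_add_of_le h
    have hcoeff := gegenbauerCoeff_mul_eq_succ l k j
    have hcast : (j : ℂ) * (j - 1 : ℕ) = j * (j - 1) := by cases j <;> simp
    have hpow (i : ℕ) : (i : ℂ) * (2 * x) ^ i = i * (2 * x * (2 * x) ^ (i - 1)) := by
      cases i <;> simp [pow_succ']
    rw [gegenbauerDefect, gegenbauerDefect, show 2 * k + j - 2 * (k + 1) = j - 1 - 1 by omega,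
      Nat.add_sub_cancel_left]
    push_cast
    linear_combination -4 * (2 * x) ^ (j - 1 - 1) * hcoeff -
      gegenbauerCoeff l (2 * k + j) k * ((2 * l + 1 + (j - 1 : ℕ)) * hpow j +
        2 * x * j * hpow (j - 1) - (2 * x) ^ j * hcast)

theorem gegenbauerPoly_differential_equation (l : ℂ) (n : ℕ) :
    C (n * (n + 2 * l)) * gegenbauerPoly l n =
      C (2 * l + 1) * X * derivative (gegenbauerPoly l n)
        - (1 - X ^ 2) * derivative (derivative (gegenbauerPoly l n)) := by
  refine Polynomial.funext fun x => ?_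
  have htelescope := Finset.sum_range_sub' (gegenbauerDefect l n x) (n / 2 + 1)
  have hend : gegenbauerDefect l n x (n / 2 + 1) = 0 := by
    rw [gegenbauerDefect, gegenbauerCoeff_eq_zero l (by omega)]; ring
  have hstart : gegenbauerDefect l n x 0 = 0 := by
    rw [gegenbauerDefect, Nat.cast_zero]; ring
  rw [hend, hstart, sub_zero] at htelescope
  rw [← sub_eq_zero, ← htelescope]
  simp only [gegenbauerPoly, derivative_sum, derivative_C_mul, derivative_two_mul_X_pow,
    gegenbauerDefect_sub_succ, eval_sub, eval_mul, eval_finsetSum, eval_C, eval_X, eval_pow,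
    eval_one, Finset.mul_sum, ← Finset.sum_sub_distrib]
  refine Finset.sum_congr rfl fun k _ => ?_
  ring

theorem gegenbauerPoly_succ (l : ℂ) (n : ℕ) :
    C ((n + 1) * (n + 1 + 2 * l)) * gegenbauerPoly l (n + 1) =
      C (2 * l) * (C (2 * l + 1) * X * gegenbauerPoly (l + 1) n
        - (1 - X ^ 2) * derivative (gegenbauerPoly (l + 1) n)) := by
  have h := gegenbauerPoly_differential_equation l (n + 1)
  rw [derivative_gegenbauerPoly_succ, derivative_C_mul] at h
  push_cast at h
  rw [h]
  ring

theorem gegenbauerPoly_eq_rodriguesPoly {l : ℂ} (hl : -(1 / 2 : ℝ) < l.re) (n : ℕ) :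
    C (2 ^ n * n.factorial * (ascPochhammer ℂ n).eval (l + 1 / 2)) * gegenbauerPoly l n =
      C ((ascPochhammer ℂ n).eval (2 * l)) * rodriguesPoly n l := by
  induction n generalizing l with
  | zero => simp [gegenbauerPoly, gegenbauerCoeff, rodriguesPoly]
  | succ n ih =>
    have hne : (n + 1 + 2 * l : ℂ) ≠ 0 := by
      refine Complex.ne_zero_of_re_pos ?_
      have hre : (n + 1 + 2 * l : ℂ).re = n + 1 + 2 * l.re := by simp
      linarith [n.cast_nonneg (α := ℝ)]
    have hP := gegenbauerPoly_succ l n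
    have hQ := ih (neg_half_lt_add_one_re hl)
    have hQ' := congrArg derivative hQ
    rw [derivative_C_mul, derivative_C_mul] at hQ'
    have hpoch : (n + 1 + 2 * l) * (ascPochhammer ℂ (n + 1)).eval (2 * l) =
        2 * l * ((2 * l + 1) * (ascPochhammer ℂ n).eval (2 * (l + 1))) := by
      rw [show 2 * (l + 1) = 2 * l + 1 + 1 by ring, ← eval_ascPochhammer_succ_left,
        ← eval_ascPochhammer_succ_left, ascPochhammer_succ_eval (n + 1)]
      push_cast; ring
    refine Polynomial.funext fun x => mul_left_cancel₀ hne ?_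
    replace hP := congrArg (Polynomial.eval x) hP
    replace hQ := congrArg (Polynomial.eval x) hQ
    replace hQ' := congrArg (Polynomial.eval x) hQ'
    simp only [eval_mul, eval_C, eval_sub, eval_X, eval_pow, eval_one] at hP hQ hQ'
    simp only [rodriguesPoly, eval_ascPochhammer_succ_left _ (l + 1 / 2), Nat.factorial_succ,
      eval_mul, eval_C, eval_sub, eval_X, eval_pow, eval_one, add_right_comm l (1 / 2)]
    push_cast
    linear_combination
      2 ^ (n + 1) * n.factorial * (l + 1 / 2) * (ascPochhammer ℂ n).eval (l + 1 + 1 / 2) * hP +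
      2 * l * (2 * l + 1) * ((2 * l + 1) * x * hQ - (1 - x ^ 2) * hQ') -
      ((2 * l + 1) * x * (rodriguesPoly n (l + 1)).eval x -
        (1 - x ^ 2) * (derivative (rodriguesPoly n (l + 1))).eval x) * hpoch

end Gegenbauer

section MomentTransfer

theorem exists_complex_polynomial_near (a b : ℝ) {g : ℝ → ℂ} (hg : ContinuousOn g (Icc a b)) {ε : ℝ}
    (hε : 0 < ε) : ∃ p : ℂ[X], ∀ x ∈ Icc a b, ‖p.eval (x : ℂ) - g x‖ ≤ ε := by
  obtain ⟨p, hp⟩ := exists_polynomial_near_of_continuousOn a b (fun x => (g x).re)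
    (Complex.continuous_re.comp_continuousOn hg) (ε / 2) (half_pos hε)
  obtain ⟨q, hq⟩ := exists_polynomial_near_of_continuousOn a b (fun x => (g x).im)
    (Complex.continuous_im.comp_continuousOn hg) (ε / 2) (half_pos hε)
  have heval (r : ℝ[X]) (x : ℝ) : (r.map Complex.ofRealHom).eval (x : ℂ) = (r.eval x : ℝ) :=
    eval_map_apply Complex.ofRealHom x
  refine ⟨p.map Complex.ofRealHom + C Complex.I * q.map Complex.ofRealHom, fun x hx => ?_⟩
  refine (Complex.norm_le_abs_re_add_abs_im _).trans ?_
  have hsum := add_le_add (hp x hx).le (hq x hx).le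
  rw [add_halves] at hsum
  simpa [heval] using hsum

variable {α β : Type*} [MeasurableSpace α] [MeasurableSpace β] {ρ : Measure α} {σ : Measure β}
  {φ : α → ℝ} {ψ : β → ℝ} {f : α → ℂ} {h : β → ℂ} {g : ℝ → ℂ} {a b : ℝ}

theorem integrable_comp_mul (hf : Integrable f ρ) (hφ : AEStronglyMeasurable φ ρ)
    (hφs : ∀ᵐ x ∂ρ, φ x ∈ Icc a b) (hg : Continuous g) :
    Integrable (fun x => g (φ x) * f x) ρ := by
  obtain ⟨M, hM⟩ := isCompact_Icc.exists_bound_of_continuousOn (hg.continuousOn (s := Icc a b))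
  exact hf.bdd_mul (hg.comp_aestronglyMeasurable hφ) (hφs.mono fun x hx => hM _ hx)

theorem integral_eval_comp_mul_eq_of_moments (hf : Integrable f ρ) (hφ : AEStronglyMeasurable φ ρ)
    (hφs : ∀ᵐ x ∂ρ, φ x ∈ Icc a b) (hh : Integrable h σ) (hψ : AEStronglyMeasurable ψ σ)
    (hψs : ∀ᵐ y ∂σ, ψ y ∈ Icc a b)
    (hmom : ∀ n : ℕ, ∫ x, (φ x : ℂ) ^ n * f x ∂ρ = ∫ y, (ψ y : ℂ) ^ n * h y ∂σ) (p : ℂ[X]) :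
    ∫ x, p.eval (φ x : ℂ) * f x ∂ρ = ∫ y, p.eval (ψ y : ℂ) * h y ∂σ := by
  have hcont (p : ℂ[X]) : Continuous fun x : ℝ => p.eval (x : ℂ) :=
    (by fun_prop)
  induction p using Polynomial.induction_on' with
  | add p q hp hq =>
    simp only [eval_add, add_mul]
    rw [integral_add (integrable_comp_mul hf hφ hφs (hcont p))
        (integrable_comp_mul hf hφ hφs (hcont q)),
      integral_add (integrable_comp_mul hh hψ hψs (hcont p))
        (integrable_comp_mul hh hψ hψs (hcont q)), hp, hq]
  | monomial n c =>
    simp only [eval_monomial, mul_assoc, MeasureTheory.integral_const_mul, hmom]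

theorem norm_integral_comp_mul_sub_le {g₁ g₂ : ℝ → ℂ} {ε : ℝ} (hf : Integrable f ρ)
    (hφ : AEStronglyMeasurable φ ρ) (hφs : ∀ᵐ x ∂ρ, φ x ∈ Icc a b) (hg₁ : Continuous g₁)
    (hg₂ : Continuous g₂) (hε : ∀ x ∈ Icc a b, ‖g₁ x - g₂ x‖ ≤ ε) :
    ‖(∫ x, g₁ (φ x) * f x ∂ρ) - ∫ x, g₂ (φ x) * f x ∂ρ‖ ≤ ε * ∫ x, ‖f x‖ ∂ρ := by
  rw [← integral_sub (integrable_comp_mul hf hφ hφs hg₁) (integrable_comp_mul hf hφ hφs hg₂),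
    ← MeasureTheory.integral_const_mul]
  refine norm_integral_le_of_norm_le (hf.norm.const_mul ε) (hφs.mono fun x hx => ?_)
  rw [← sub_mul, norm_mul]
  exact mul_le_mul_of_nonneg_right (hε _ hx) (norm_nonneg _)

theorem integral_comp_mul_eq_of_moments (hf : Integrable f ρ) (hφ : AEStronglyMeasurable φ ρ)
    (hφs : ∀ᵐ x ∂ρ, φ x ∈ Icc a b) (hh : Integrable h σ) (hψ : AEStronglyMeasurable ψ σ)
    (hψs : ∀ᵐ y ∂σ, ψ y ∈ Icc a b)
    (hmom : ∀ n : ℕ, ∫ x, (φ x : ℂ) ^ n * f x ∂ρ = ∫ y, (ψ y : ℂ) ^ n * h y ∂σ)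
    (hg : Continuous g) : ∫ x, g (φ x) * f x ∂ρ = ∫ y, g (ψ y) * h y ∂σ := by
  set A := (∫ x, ‖f x‖ ∂ρ) + ∫ y, ‖h y‖ ∂σ with hA
  have hA0 : 0 < A + 1 := by positivity
  refine eq_of_forall_dist_le fun ε hε => ?_
  obtain ⟨p, hp⟩ := exists_complex_polynomial_near a b hg.continuousOn (div_pos hε hA0)
  have hpc : Continuous fun x : ℝ => p.eval (x : ℂ) := by fun_prop
  have hpf := norm_integral_comp_mul_sub_le hf hφ hφs hpc hg hp
  have hph := norm_integral_comp_mul_sub_le hh hψ hψs hpc hg hp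
  rw [← integral_eval_comp_mul_eq_of_moments hf hφ hφs hh hψ hψs hmom, ← dist_eq_norm] at hph
  rw [← dist_eq_norm, dist_comm] at hpf
  calc dist (∫ x, g (φ x) * f x ∂ρ) (∫ y, g (ψ y) * h y ∂σ)
      ≤ ε / (A + 1) * A := by
        rw [hA, mul_add]; exact (dist_triangle _ _ _).trans (add_le_add hpf hph)
    _ ≤ ε := by rw [div_mul_eq_mul_div, div_le_iff₀ hA0]; nlinarith

end MomentTransfer

section RadialReduction

variable {l b : ℂ}

theorem weightedIntegral_pow_mul_rodriguesPoly (hl : -(1 / 2 : ℝ) < l.re) (m n : ℕ) :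
    weightedIntegral l (fun x => (x : ℂ) ^ n * (rodriguesPoly m l).eval (x : ℂ)) =
      n.descFactorial m * weightedIntegral (l + m) (fun x => (x : ℂ) ^ (n - m)) := by
  have h := weightedIntegral_mul_rodriguesPoly (n := m) hl (contDiff_eval_ofReal (X ^ n))
  rw [iteratedDeriv_eval_ofReal, iterate_derivative_X_pow_eq_natCast_mul] at h
  simpa only [eval_pow, eval_X, eval_mul, eval_natCast, weightedIntegral_const_mul] using h

theorem intervalIntegrable_cpow_mul_one_sub_cpow {a : ℂ} (ha : -1 < a.re) (hb : -1 < b.re) :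
    IntervalIntegrable (fun y : ℝ => (y : ℂ) ^ a * ((1 - y : ℝ) : ℂ) ^ b) volume 0 1 := by
  have h := Complex.betaIntegral_convergent (u := a + 1) (v := b + 1)
    (by rw [Complex.add_re, Complex.one_re]; linarith)
    (by rw [Complex.add_re, Complex.one_re]; linarith)
  simpa only [add_sub_cancel_right, Complex.ofReal_sub, Complex.ofReal_one] using h

theorem integral_cpow_mul_one_sub_cpow {a : ℂ} (ha : -1 < a.re) (hb : -1 < b.re) :
    ∫ y in (0 : ℝ)..1, (y : ℂ) ^ a * ((1 - y : ℝ) : ℂ) ^ b =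
      Complex.Gamma (a + 1) * Complex.Gamma (b + 1) / Complex.Gamma (a + b + 2) := by
  have h := Complex.betaIntegral_eq_Gamma_mul_div (a + 1) (b + 1)
    (by rw [Complex.add_re, Complex.one_re]; linarith)
    (by rw [Complex.add_re, Complex.one_re]; linarith)
  rw [show a + b + 2 = a + 1 + (b + 1) by ring, ← h, Complex.betaIntegral]
  simp only [add_sub_cancel_right, Complex.ofReal_sub, Complex.ofReal_one]

theorem weightedIntegral_pow_mul_Gamma_ratio (hl : -(1 / 2 : ℝ) < l.re) (hb : -1 < b.re) (k : ℕ) :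
    weightedIntegral l (fun x => (x : ℂ) ^ k) *
        (Complex.Gamma (l + k / 2 + 1) / Complex.Gamma (l + k / 2 + b + 2)) =
      Complex.Gamma (l + 1 / 2) / Complex.Gamma (l + b + 1 + 1 / 2) *
        weightedIntegral (l + b + 1) (fun x => (x : ℂ) ^ k) := by
  rcases Nat.even_or_odd' k with ⟨q, rfl | rfl⟩
  · have hlb := neg_half_lt_add_add_one_re hl hb
    have hΓ₁ : Complex.Gamma (l + q + 1) ≠ 0 := Complex.Gamma_ne_zero_of_re_pos
      (by linarith [half_lt_add_one_re (neg_half_lt_add_natCast_re hl q)])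
    have hΓ₂ : Complex.Gamma (l + b + 1 + 1 / 2) ≠ 0 :=
      Complex.Gamma_ne_zero_of_re_pos (add_one_half_re_pos hlb)
    rw [weightedIntegral_pow_two_mul hl, weightedIntegral_pow_two_mul hlb,
      show l + ((2 * q : ℕ) : ℂ) / 2 = l + q by push_cast; ring,
      show l + q + b + 2 = l + b + 1 + q + 1 by ring]
    generalize Complex.Gamma (l + q + 1) = Γ₁ at *
    generalize Complex.Gamma (l + b + 1 + 1 / 2) = Γ₂ at *
    field_simp
  · have hodd : Odd (2 * q + 1) := odd_two_mul_add_one q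
    rw [weightedIntegral_pow_of_odd l hodd, weightedIntegral_pow_of_odd _ hodd, zero_mul, mul_zero]

theorem sqrt_pow_mul_cpow {y : ℝ} (hy : 0 < y) (a : ℂ) (n : ℕ) :
    ((√y : ℝ) : ℂ) ^ n * (y : ℂ) ^ a = (y : ℂ) ^ (a + n / 2) := by
  have hroot : ((√y : ℝ) : ℂ) ^ n = (y : ℂ) ^ ((n : ℂ) / 2) := by
    rw [Real.sqrt_eq_rpow, Complex.ofReal_cpow hy.le, ← Complex.cpow_nat_mul]
    congr 1; push_cast; ring
  rw [hroot, ← Complex.cpow_add _ _ (by exact_mod_cast hy.ne'), add_comm]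

theorem integral_sqrt_pow_mul {a : ℂ} (ha : -1 < a.re) (hb : -1 < b.re) (n : ℕ) :
    ∫ y in (0 : ℝ)..1, ((√y : ℝ) : ℂ) ^ n * ((y : ℂ) ^ a * ((1 - y : ℝ) : ℂ) ^ b) =
      Complex.Gamma (a + n / 2 + 1) * Complex.Gamma (b + 1) /
        Complex.Gamma (a + n / 2 + b + 2) := by
  have ha' : -1 < (a + n / 2).re := by
    rw [Complex.add_re, Complex.div_ofNat_re, Complex.natCast_re]
    linarith [n.cast_nonneg (α := ℝ)]
  rw [← integral_cpow_mul_one_sub_cpow ha' hb]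
  refine integral_congr_ae (Eventually.of_forall fun y hy => ?_)
  rw [uIoc_of_le zero_le_one] at hy
  rw [← mul_assoc, sqrt_pow_mul_cpow hy.1]

theorem weightedIntegral_pow_mul_rodriguesPoly_mul_integral_sqrt (hl : -(1 / 2 : ℝ) < l.re)
    (hb : -1 < b.re) (m n : ℕ) :
    weightedIntegral l (fun x => (x : ℂ) ^ n * (rodriguesPoly m l).eval (x : ℂ)) *
        ∫ y in (0 : ℝ)..1, ((√y : ℝ) : ℂ) ^ n *
          ((y : ℂ) ^ (l + m / 2) * ((1 - y : ℝ) : ℂ) ^ b) =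
      Complex.Gamma (l + m + 1 / 2) * Complex.Gamma (b + 1) /
          Complex.Gamma (l + b + 1 + m + 1 / 2) *
        weightedIntegral (l + b + 1)
          (fun x => (x : ℂ) ^ n * (rodriguesPoly m (l + b + 1)).eval (x : ℂ)) := by
  have hlb := neg_half_lt_add_add_one_re hl hb
  have ha : -1 < (l + m / 2).re := by
    rw [Complex.add_re, Complex.div_ofNat_re, Complex.natCast_re]
    linarith [m.cast_nonneg (α := ℝ)]
  rw [weightedIntegral_pow_mul_rodriguesPoly hl, weightedIntegral_pow_mul_rodriguesPoly hlb,
    integral_sqrt_pow_mul ha hb]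
  rcases lt_or_ge n m with h | h
  · rw [Nat.descFactorial_of_lt h]; simp
  · obtain ⟨k, rfl⟩ := Nat.exists_eq_add_of_le h
    have hmom := weightedIntegral_pow_mul_Gamma_ratio (neg_half_lt_add_natCast_re hl m) hb k
    rw [show l + m + b + 1 = l + b + 1 + m by ring] at hmom
    rw [Nat.add_sub_cancel_left,
      show l + m / 2 + ((m + k : ℕ) : ℂ) / 2 = l + m + k / 2 by push_cast; ring]
    linear_combination (m + k).descFactorial m * Complex.Gamma (b + 1) * hmom

theorem ae_mul_sqrt_mem_Icc :
    ∀ᵐ p : ℝ × ℝ ∂(volume.restrict (Ioc (-1) 1)).prod (volume.restrict (Ioc 0 1)),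
      p.1 * √p.2 ∈ Icc (-1 : ℝ) 1 := by
  rw [Measure.prod_restrict]
  filter_upwards [ae_restrict_mem (measurableSet_Ioc.prod measurableSet_Ioc)] with p hp
  rw [mem_Icc, ← abs_le, abs_mul, abs_of_nonneg (Real.sqrt_nonneg _)]
  exact mul_le_one₀ (abs_le.2 ⟨hp.1.1.le, hp.1.2⟩) (Real.sqrt_nonneg _) (Real.sqrt_le_one.2 hp.2.2)

theorem integral_integral_comp_mul_sqrt_of_moments {f k h g : ℝ → ℂ}
    (hf : IntervalIntegrable f volume (-1) 1) (hk : IntervalIntegrable k volume 0 1)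
    (hh : IntervalIntegrable h volume (-1) 1)
    (hmom : ∀ n : ℕ, (∫ t in (-1 : ℝ)..1, (t : ℂ) ^ n * f t) *
        ∫ y in (0 : ℝ)..1, ((√y : ℝ) : ℂ) ^ n * k y = ∫ x in (-1 : ℝ)..1, (x : ℂ) ^ n * h x)
    (hg : Continuous g) :
    ∫ t in (-1 : ℝ)..1, ∫ y in (0 : ℝ)..1, g (t * √y) * (f t * k y) =
      ∫ x in (-1 : ℝ)..1, g x * h x := by
  have h11 : (-1 : ℝ) ≤ 1 := by norm_num
  simp only [integral_of_le h11, integral_of_le zero_le_one] at hmom ⊢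
  have hfk := hf.1.integrable.mul_prod hk.1.integrable
  have hφ : Continuous fun p : ℝ × ℝ => p.1 * √p.2 := by fun_prop
  have h := integral_comp_mul_eq_of_moments hfk hφ.aestronglyMeasurable ae_mul_sqrt_mem_Icc
    hh.1 aestronglyMeasurable_id
    ((ae_restrict_mem measurableSet_Ioc).mono fun x hx => Ioc_subset_Icc_self hx) (fun n => ?_) hg
  · exact (integral_prod _ (integrable_comp_mul hfk hφ.aestronglyMeasurable
      ae_mul_sqrt_mem_Icc hg)).symm.trans h
  · simp only [id_eq]
    rw [← hmom, ← integral_prod_mul]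
    congr 1 with p
    push_cast
    ring

theorem integral_integral_comp_mul_sqrt {g : ℝ → ℂ} (hl : -(1 / 2 : ℝ) < l.re) (hb : -1 < b.re)
    (m : ℕ) (hg : Continuous g) :
    ∫ t in (-1 : ℝ)..1, ∫ y in (0 : ℝ)..1, g (t * √y) *
        ((rodriguesPoly m l).eval (t : ℂ) * gegenbauerWeight l t *
          ((y : ℂ) ^ (l + m / 2) * ((1 - y : ℝ) : ℂ) ^ b)) =
      Complex.Gamma (l + m + 1 / 2) * Complex.Gamma (b + 1) /
          Complex.Gamma (l + b + 1 + m + 1 / 2) *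
        weightedIntegral (l + b + 1)
          (fun x => g x * (rodriguesPoly m (l + b + 1)).eval (x : ℂ)) := by
  have hlb := neg_half_lt_add_add_one_re hl hb
  have ha : -1 < (l + m / 2).re := by
    rw [Complex.add_re, Complex.div_ofNat_re, Complex.natCast_re]
    linarith [m.cast_nonneg (α := ℝ)]
  have hint {l : ℂ} (hl : -(1 / 2 : ℝ) < l.re) := intervalIntegrable_mul_gegenbauerWeight hl
    (f := fun x => (rodriguesPoly m l).eval (x : ℂ)) (by fun_prop)
  set c := Complex.Gamma (l + m + 1 / 2) * Complex.Gamma (b + 1) /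
    Complex.Gamma (l + b + 1 + m + 1 / 2) with hc
  rw [integral_integral_comp_mul_sqrt_of_moments (hint hl)
    (intervalIntegrable_cpow_mul_one_sub_cpow ha hb) ((hint hlb).const_mul c) (fun n => ?_)
    hg, ← weightedIntegral_const_mul]
  · simp only [weightedIntegral]
    congr 1 with x
    ring
  · have h := weightedIntegral_pow_mul_rodriguesPoly_mul_integral_sqrt hl hb m n
    rw [← hc, ← weightedIntegral_const_mul] at h
    simp only [weightedIntegral, mul_assoc] at h
    rw [h]
    congr 1 with x
    ring

end RadialReduction

section SignedPower

/-- The kernel `sgn(u)^ε |u|^β` on the real line. Keeping track of the parity `ε` of the sign makes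
the family stable under differentiation. -/
noncomputable def signedAbsCpow (ε : ℕ) (β : ℂ) (u : ℝ) : ℂ :=
  ((SignType.sign u : ℝ) : ℂ) ^ ε * ((|u| : ℝ) : ℂ) ^ β

variable {β : ℂ} {u : ℝ}

theorem signedAbsCpow_apply_zero (ε : ℕ) (hβ : β ≠ 0) : signedAbsCpow ε β 0 = 0 := by
  rw [signedAbsCpow, abs_zero, Complex.ofReal_zero, Complex.zero_cpow hβ, mul_zero]

theorem signedAbsCpow_zero_left (β : ℂ) (u : ℝ) :
    signedAbsCpow 0 β u = ((|u| : ℝ) : ℂ) ^ β := by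
  rw [signedAbsCpow, pow_zero, one_mul]

theorem ofReal_sign_sq (hu : u ≠ 0) : ((SignType.sign u : ℝ) : ℂ) ^ 2 = 1 := by
  rcases hu.lt_or_gt with h | h
  · simp [sign_neg h]
  · simp [sign_pos h]

theorem mul_signedAbsCpow (ε : ℕ) (hβ : β ≠ 0) (u : ℝ) :
    u * signedAbsCpow (ε + 1) (β - 1) u = signedAbsCpow ε β u := by
  rcases eq_or_ne u 0 with rfl | hu
  · rw [signedAbsCpow_apply_zero ε hβ, Complex.ofReal_zero, zero_mul]
  · have habs : ((|u| : ℝ) : ℂ) ≠ 0 := by exact_mod_cast abs_ne_zero.2 hu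
    have hsign : (u : ℂ) = ((SignType.sign u : ℝ) : ℂ) * ((|u| : ℝ) : ℂ) := by
      rw [← Complex.ofReal_mul, sign_mul_abs]
    have hpow : ((|u| : ℝ) : ℂ) * ((|u| : ℝ) : ℂ) ^ (β - 1) = ((|u| : ℝ) : ℂ) ^ β := by
      rw [Complex.cpow_sub _ _ habs, Complex.cpow_one, mul_div_cancel₀ _ habs]
    rw [signedAbsCpow, signedAbsCpow, ← hpow]
    linear_combination ((SignType.sign u : ℝ) : ℂ) ^ (ε + 1) * ((|u| : ℝ) : ℂ) ^ (β - 1) * hsign +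
      ((SignType.sign u : ℝ) : ℂ) ^ ε * ((|u| : ℝ) : ℂ) * ((|u| : ℝ) : ℂ) ^ (β - 1) *
        ofReal_sign_sq hu

theorem signedAbsCpow_two_mul (N : ℕ) (hβ : β ≠ 0) (u : ℝ) :
    signedAbsCpow (2 * N) β u = ((|u| : ℝ) : ℂ) ^ β := by
  rcases eq_or_ne u 0 with rfl | hu
  · rw [signedAbsCpow_apply_zero _ hβ, abs_zero, Complex.ofReal_zero, Complex.zero_cpow hβ]
  · rw [signedAbsCpow, pow_mul, ofReal_sign_sq hu, one_pow, one_mul]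

theorem hasDerivAt_signedAbsCpow_of_ne (ε : ℕ) (β : ℂ) (hu : u ≠ 0) :
    HasDerivAt (signedAbsCpow ε β) (β * signedAbsCpow (ε + 1) (β - 1) u) u := by
  have hpow := ((hasDerivAt_id ((|u| : ℝ) : ℂ)).cpow_const (c := β)
    (Or.inl (by simpa using abs_pos.2 hu))).comp_ofReal.scomp u (hasDerivAt_abs hu)
  have hlocal : signedAbsCpow ε β =ᶠ[𝓝 u]
      fun v => ((SignType.sign u : ℝ) : ℂ) ^ ε * ((|v| : ℝ) : ℂ) ^ β := by
    have hsign : ∀ᶠ v in 𝓝 u, SignType.sign v = SignType.sign u := by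
      rw [← tendsto_pure, ← nhds_discrete]
      exact continuousAt_sign_of_ne_zero hu
    filter_upwards [hsign] with v hv
    rw [signedAbsCpow, hv]
  refine ((hpow.const_mul _).congr_of_eventuallyEq hlocal).congr_deriv ?_
  rw [signedAbsCpow, Complex.real_smul, id]
  ring

theorem norm_signedAbsCpow_le (ε : ℕ) (β : ℂ) (u : ℝ) :
    ‖signedAbsCpow ε β u‖ ≤ ‖((|u| : ℝ) : ℂ) ^ β‖ := by
  rw [signedAbsCpow, norm_mul, norm_pow, Complex.norm_real]
  refine mul_le_of_le_one_left (norm_nonneg _) (pow_le_one₀ (norm_nonneg _) ?_)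
  rcases SignType.trichotomy (SignType.sign u) with h | h | h <;> simp [h]

theorem continuous_signedAbsCpow (ε : ℕ) (hβ : 0 < β.re) : Continuous (signedAbsCpow ε β) := by
  have hβ0 : β ≠ 0 := by rintro rfl; exact lt_irrefl _ hβ
  rw [continuous_iff_continuousAt]
  intro u
  rcases eq_or_ne u 0 with rfl | hu
  · rw [ContinuousAt, signedAbsCpow_apply_zero ε hβ0]
    refine squeeze_zero_norm (norm_signedAbsCpow_le ε β) ?_
    have h := (((Complex.continuous_ofReal_cpow_const hβ).comp continuous_abs).norm).tendsto 0
    simpa [Function.comp_def, Complex.zero_cpow hβ0] using h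
  · exact (hasDerivAt_signedAbsCpow_of_ne ε β hu).continuousAt

theorem hasDerivAt_signedAbsCpow (ε : ℕ) (hβ : 1 < β.re) (u : ℝ) :
    HasDerivAt (signedAbsCpow ε β) (β * signedAbsCpow (ε + 1) (β - 1) u) u := by
  rcases eq_or_ne u 0 with rfl | hu
  · have hβ' : 0 < (β - 1).re := by rw [Complex.sub_re, Complex.one_re]; linarith
    have hβ0 : β ≠ 0 := by rintro rfl; norm_num at hβ
    have hβ1 : β - 1 ≠ 0 := by intro h; rw [h] at hβ'; exact lt_irrefl _ hβ'
    have hcont := ((continuous_signedAbsCpow (ε + 1) hβ').tendsto 0).mono_left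
      (nhdsWithin_le_nhds (s := {0}ᶜ))
    rw [signedAbsCpow_apply_zero _ hβ1] at hcont ⊢
    rw [hasDerivAt_iff_tendsto_slope, mul_zero]
    refine hcont.congr' ?_
    filter_upwards [self_mem_nhdsWithin] with x hx
    rw [slope_def_module, signedAbsCpow_apply_zero ε hβ0, sub_zero, sub_zero,
      ← mul_signedAbsCpow ε hβ0, Complex.real_smul, Complex.ofReal_inv,
      inv_mul_cancel_left₀ (by exact_mod_cast hx)]
  · exact hasDerivAt_signedAbsCpow_of_ne ε β hu

theorem contDiff_signedAbsCpow {n : ℕ} (ε : ℕ) (hβ : n < β.re) :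
    ContDiff ℝ n (signedAbsCpow ε β) := by
  induction n generalizing ε β with
  | zero => exact contDiff_zero.2 (continuous_signedAbsCpow ε (by simpa using hβ))
  | succ n ih =>
    push_cast at hβ
    have hderiv := hasDerivAt_signedAbsCpow ε (β := β) (by linarith [n.cast_nonneg (α := ℝ)])
    rw [Nat.cast_succ, contDiff_succ_iff_deriv]
    refine ⟨fun u => (hderiv u).differentiableAt, by simp, ?_⟩
    rw [funext fun u => (hderiv u).deriv]
    exact contDiff_const.mul (ih (ε + 1) (by rw [Complex.sub_re, Complex.one_re]; linarith))

theorem iteratedDeriv_signedAbsCpow {n : ℕ} (ε : ℕ) (hβ : n < β.re) :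
    iteratedDeriv n (signedAbsCpow ε β) =
      fun u => (descPochhammer ℂ n).eval β * signedAbsCpow (ε + n) (β - n) u := by
  induction n with
  | zero => simp
  | succ n ih =>
    push_cast at hβ
    have hβ' : 1 < (β - n).re := by rw [Complex.sub_re, Complex.natCast_re]; linarith
    ext u
    rw [iteratedDeriv_succ, ih (by linarith),
      ((hasDerivAt_signedAbsCpow (ε + n) hβ' u).const_mul _).deriv, descPochhammer_succ_eval,
      Nat.cast_succ, sub_add_eq_sub_sub, ← add_assoc]
    ring

end SignedPower

section DoubleIntegral

/-- The integral of `F s x` over the square `[-1, 1]²` against `W_λ(s) W_μ(x) ds dx`, where `W` is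
the Gegenbauer weight. -/
noncomputable def weightedIntegral₂ (l m : ℂ) (F : ℝ → ℝ → ℂ) : ℂ :=
  ∫ z, F z.1 z.2 * (gegenbauerWeight l z.1 * gegenbauerWeight m z.2)
    ∂(volume.restrict (Ioc (-1 : ℝ) 1)).prod (volume.restrict (Ioc (-1 : ℝ) 1))

variable {l m : ℂ} {F G F' : ℝ → ℝ → ℂ} {k : ℝ → ℂ}

theorem weightedIntegral_eq_setIntegral (l : ℂ) (f : ℝ → ℂ) :
    weightedIntegral l f = ∫ x in Ioc (-1) 1, f x * gegenbauerWeight l x :=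
  integral_of_le (by norm_num)

theorem integrable_gegenbauerWeight_mul (hl : -(1 / 2 : ℝ) < l.re) (hm : -(1 / 2 : ℝ) < m.re) :
    Integrable (fun z : ℝ × ℝ => gegenbauerWeight l z.1 * gegenbauerWeight m z.2)
      ((volume.restrict (Ioc (-1) 1)).prod (volume.restrict (Ioc (-1) 1))) :=
  (intervalIntegrable_gegenbauerWeight hl).1.integrable.mul_prod
    (intervalIntegrable_gegenbauerWeight hm).1.integrable

theorem integrable_mul_gegenbauerWeight_mul (hl : -(1 / 2 : ℝ) < l.re)
    (hm : -(1 / 2 : ℝ) < m.re) (hF : Continuous (Function.uncurry F)) :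
    Integrable (fun z : ℝ × ℝ => F z.1 z.2 * (gegenbauerWeight l z.1 * gegenbauerWeight m z.2))
      ((volume.restrict (Ioc (-1) 1)).prod (volume.restrict (Ioc (-1) 1))) := by
  obtain ⟨C, hC⟩ := ((isCompact_Icc (a := (-1 : ℝ)) (b := 1)).prod
    (isCompact_Icc (a := (-1 : ℝ)) (b := 1))).exists_bound_of_continuousOn hF.continuousOn
  refine (integrable_gegenbauerWeight_mul hl hm).bdd_mul (c := C) hF.aestronglyMeasurable ?_
  rw [Measure.prod_restrict]
  filter_upwards [ae_restrict_mem (measurableSet_Ioc.prod measurableSet_Ioc)] with z hz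
  exact hC z ⟨Ioc_subset_Icc_self hz.1, Ioc_subset_Icc_self hz.2⟩

theorem weightedIntegral₂_eq (hl : -(1 / 2 : ℝ) < l.re) (hm : -(1 / 2 : ℝ) < m.re)
    (hF : Continuous (Function.uncurry F)) :
    weightedIntegral₂ l m F = weightedIntegral l fun s => weightedIntegral m (F s) := by
  rw [weightedIntegral₂, integral_prod _ (integrable_mul_gegenbauerWeight_mul hl hm hF),
    weightedIntegral_eq_setIntegral]
  congr 1 with s
  rw [weightedIntegral_eq_setIntegral, ← MeasureTheory.integral_mul_const]
  congr 1 with x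
  ring

theorem weightedIntegral₂_comm (l m : ℂ) (F : ℝ → ℝ → ℂ) :
    weightedIntegral₂ l m F = weightedIntegral₂ m l fun x s => F s x := by
  rw [weightedIntegral₂, weightedIntegral₂, ← integral_prod_swap]
  congr 1 with z
  rw [Prod.fst_swap, Prod.snd_swap, mul_comm (gegenbauerWeight l z.2)]

theorem weightedIntegral₂_add (hl : -(1 / 2 : ℝ) < l.re) (hm : -(1 / 2 : ℝ) < m.re)
    (hF : Continuous (Function.uncurry F)) (hG : Continuous (Function.uncurry G)) :
    weightedIntegral₂ l m (fun s x => F s x + G s x) =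
      weightedIntegral₂ l m F + weightedIntegral₂ l m G := by
  simp only [weightedIntegral₂, add_mul]
  exact integral_add (integrable_mul_gegenbauerWeight_mul hl hm hF)
    (integrable_mul_gegenbauerWeight_mul hl hm hG)

theorem weightedIntegral₂_const_mul (l m c : ℂ) (F : ℝ → ℝ → ℂ) :
    weightedIntegral₂ l m (fun s x => c * F s x) = c * weightedIntegral₂ l m F := by
  simp only [weightedIntegral₂, mul_assoc, MeasureTheory.integral_const_mul]

theorem weightedIntegral₂_add_one_left (hl : -(1 / 2 : ℝ) < l.re) (m : ℂ) (F : ℝ → ℝ → ℂ) :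
    weightedIntegral₂ (l + 1) m F = weightedIntegral₂ l m fun s x => (1 - (s : ℂ) ^ 2) * F s x := by
  rw [weightedIntegral₂, weightedIntegral₂]
  congr 1 with z
  rw [gegenbauerWeight_add_one hl]
  ring

theorem weightedIntegral₂_add_one_right (l : ℂ) (hm : -(1 / 2 : ℝ) < m.re) (F : ℝ → ℝ → ℂ) :
    weightedIntegral₂ l (m + 1) F = weightedIntegral₂ l m fun s x => (1 - (x : ℂ) ^ 2) * F s x := by
  rw [weightedIntegral₂_comm, weightedIntegral₂_add_one_left hm, weightedIntegral₂_comm]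

theorem weightedIntegral₂_deriv_right (hl : -(1 / 2 : ℝ) < l.re) (hm : -(1 / 2 : ℝ) < m.re)
    (hF : Continuous (Function.uncurry F)) (hF' : Continuous (Function.uncurry F'))
    (hd : ∀ s x, HasDerivAt (F s) (F' s x) x) :
    weightedIntegral₂ l (m + 1) F' = weightedIntegral₂ l m fun s x => (2 * m + 1) * x * F s x := by
  rw [weightedIntegral₂_eq hl (neg_half_lt_add_one_re hm) hF', weightedIntegral₂_eq hl hm]
  · congr 1 with s
    have hderiv : deriv (F s) = F' s := deriv_eq (hd s)
    have hsmooth : ContDiff ℝ 1 (F s) := contDiff_one_iff_deriv.2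
      ⟨fun x => (hd s x).differentiableAt, by rw [hderiv]; exact hF'.uncurry_left s⟩
    rw [← hderiv, weightedIntegral_deriv hm hsmooth]
  · exact (by fun_prop : Continuous fun z : ℝ × ℝ => (2 * m + 1) * z.2).mul hF

theorem weightedIntegral₂_deriv_left (hl : -(1 / 2 : ℝ) < l.re) (hm : -(1 / 2 : ℝ) < m.re)
    (hF : Continuous (Function.uncurry F)) (hF' : Continuous (Function.uncurry F'))
    (hd : ∀ s x, HasDerivAt (fun s => F s x) (F' s x) s) :
    weightedIntegral₂ (l + 1) m F' = weightedIntegral₂ l m fun s x => (2 * l + 1) * s * F s x := by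
  rw [weightedIntegral₂_comm, weightedIntegral₂_comm l]
  exact weightedIntegral₂_deriv_right hm hl (F := fun x s => F s x) (hF.comp continuous_swap)
    (hF'.comp continuous_swap) fun x s => hd s x

theorem continuous_weightedIntegral (hm : -(1 / 2 : ℝ) < m.re)
    (hF : Continuous (Function.uncurry F)) : Continuous fun s => weightedIntegral m (F s) := by
  rw [continuous_iff_continuousAt]
  intro s₀
  obtain ⟨C, hC⟩ := ((isCompact_Icc (a := s₀ - 1) (b := s₀ + 1)).prod
    (isCompact_Icc (a := (-1 : ℝ)) (b := 1))).exists_bound_of_continuousOn hF.continuousOn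
  refine continuousAt_of_dominated_interval (bound := fun x => C * ‖gegenbauerWeight m x‖) ?_ ?_
    ((intervalIntegrable_gegenbauerWeight hm).norm.const_mul C)
    (Eventually.of_forall fun x _ => ?_)
  · exact Eventually.of_forall fun s =>
      (intervalIntegrable_mul_gegenbauerWeight hm (hF.uncurry_left s)).def'.aestronglyMeasurable
  · filter_upwards [Icc_mem_nhds (sub_one_lt s₀) (lt_add_one s₀)] with s hs
    refine Eventually.of_forall fun x hx => ?_
    rw [uIoc_of_le (by norm_num)] at hx
    rw [norm_mul]
    exact mul_le_mul_of_nonneg_right (hC (s, x) ⟨hs, Ioc_subset_Icc_self hx⟩) (norm_nonneg _)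
  · exact ((hF.uncurry_right x).continuousAt).mul continuousAt_const

theorem weightedIntegral₂_mul_rodriguesPoly_right {q : ℕ} {P : ℝ → ℂ}
    (hl : -(1 / 2 : ℝ) < l.re) (hm : -(1 / 2 : ℝ) < m.re) (hk : ContDiff ℝ q k)
    (hP : Continuous P) :
    weightedIntegral₂ l m (fun s x => k (s - x) * (P s * (rodriguesPoly q m).eval (x : ℂ))) =
      (-1) ^ q * weightedIntegral₂ l (m + q) fun s x => iteratedDeriv q k (s - x) * P s := by
  have hk₀ := hk.continuous
  have := hk.continuous_iteratedDeriv q le_rfl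
  rw [← weightedIntegral₂_const_mul, weightedIntegral₂_eq hl hm (by fun_prop),
    weightedIntegral₂_eq hl (neg_half_lt_add_natCast_re hm q) (by fun_prop)]
  congr 1 with s
  have hks : ContDiff ℝ q fun x => k (s - x) := hk.comp (contDiff_const.sub contDiff_id)
  have hP_left : ∀ x : ℝ, k (s - x) * (P s * (rodriguesPoly q m).eval (x : ℂ)) =
      P s * (k (s - x) * (rodriguesPoly q m).eval (x : ℂ)) := fun x => mul_left_comm _ _ _
  have hP_left' : ∀ x : ℝ, (-1) ^ q * (iteratedDeriv q k (s - x) * P s) =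
      P s * ((-1) ^ q * iteratedDeriv q k (s - x)) := fun x => by ring
  simp only [hP_left, hP_left']
  rw [weightedIntegral_const_mul, weightedIntegral_const_mul _ (P s),
    weightedIntegral_mul_rodriguesPoly hm hks, iteratedDeriv_comp_const_sub]
  simp only [Complex.real_smul, Complex.ofReal_pow, Complex.ofReal_neg, Complex.ofReal_one]

theorem weightedIntegral₂_mul_rodriguesPoly_left {p : ℕ}
    (hl : -(1 / 2 : ℝ) < l.re) (hm : -(1 / 2 : ℝ) < m.re) (hk : ContDiff ℝ p k) :
    weightedIntegral₂ l m (fun s x => k (s - x) * (rodriguesPoly p l).eval (s : ℂ)) =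
      weightedIntegral₂ (l + p) m fun s x => iteratedDeriv p k (s - x) := by
  have hk₀ := hk.continuous
  have := hk.continuous_iteratedDeriv p le_rfl
  rw [weightedIntegral₂_comm, weightedIntegral₂_comm (l + p), weightedIntegral₂_eq hm hl
    (by fun_prop), weightedIntegral₂_eq hm (neg_half_lt_add_natCast_re hl p) (by fun_prop)]
  congr 1 with x
  have hkx : ContDiff ℝ p fun s => k (s - x) := hk.comp (contDiff_id.sub contDiff_const)
  rw [weightedIntegral_mul_rodriguesPoly hl hkx, iteratedDeriv_comp_sub_const]

theorem weightedIntegral₂_mul_rodriguesPoly_mul_rodriguesPoly {p q : ℕ}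
    (hl : -(1 / 2 : ℝ) < l.re) (hm : -(1 / 2 : ℝ) < m.re) (hk : ContDiff ℝ (p + q : ℕ) k) :
    weightedIntegral₂ l m (fun s x =>
        k (s - x) * ((rodriguesPoly p l).eval (s : ℂ) * (rodriguesPoly q m).eval (x : ℂ))) =
      (-1) ^ q * weightedIntegral₂ (l + p) (m + q) fun s x =>
        iteratedDeriv (p + q) k (s - x) := by
  have hkq : ContDiff ℝ p (iteratedDeriv q k) := by
    rw [iteratedDeriv_eq_iterate]
    exact ContDiff.iterate_deriv' p q (by exact_mod_cast hk)
  rw [weightedIntegral₂_mul_rodriguesPoly_right hl hm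
    (hk.of_le (by exact_mod_cast q.le_add_left p)) (by fun_prop),
    weightedIntegral₂_mul_rodriguesPoly_left hl (neg_half_lt_add_natCast_re hm q) hkq]
  simp only [iteratedDeriv_eq_iterate, Function.iterate_add_apply]

end DoubleIntegral

section RieszIntegral

variable {l m β : ℂ}

-- Both partial derivatives are combined through `(1 - s²) x - (1 - x²) s = -(s - x) (1 + s x)`.
theorem weightedIntegral₂_mul_mul_signedAbsCpow (hl : -(1 / 2 : ℝ) < l.re)
    (hm : -(1 / 2 : ℝ) < m.re) (hβ : 1 < β.re) :
    (2 * l + 2 * m + 2 + β) * weightedIntegral₂ l m (fun s x => s * x * signedAbsCpow 0 β (s - x)) =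
      -β * weightedIntegral₂ l m (fun s x => signedAbsCpow 0 β (s - x)) := by
  have hβ0 : β ≠ 0 := by rintro rfl; norm_num at hβ
  have hk := continuous_signedAbsCpow 0 (zero_lt_one.trans hβ)
  have hk' := continuous_signedAbsCpow 1 (β := β - 1)
    (by rw [Complex.sub_re, Complex.one_re]; linarith)
  have hkd := hasDerivAt_signedAbsCpow 0 hβ
  have hleft := weightedIntegral₂_deriv_left hl hm (F := fun s x => x * signedAbsCpow 0 β (s - x))
    (F' := fun s x => x * (β * signedAbsCpow 1 (β - 1) (s - x))) (by fun_prop) (by fun_prop)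
    fun s x => ((hkd (s - x)).comp_sub_const s x).const_mul _
  have hright := weightedIntegral₂_deriv_right hl hm
    (F := fun s x => s * signedAbsCpow 0 β (s - x))
    (F' := fun s x => s * -(β * signedAbsCpow 1 (β - 1) (s - x))) (by fun_prop) (by fun_prop)
    fun s x => ((hkd (s - x)).comp_const_sub s x).const_mul _
  rw [weightedIntegral₂_add_one_left hl] at hleft
  rw [weightedIntegral₂_add_one_right l hm] at hright
  have hsum : ∀ s x : ℝ, -β * (signedAbsCpow 0 β (s - x) + s * x * signedAbsCpow 0 β (s - x)) =
      (1 - (s : ℂ) ^ 2) * (x * (β * signedAbsCpow 1 (β - 1) (s - x))) +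
        (1 - (x : ℂ) ^ 2) * (s * -(β * signedAbsCpow 1 (β - 1) (s - x))) := by
    intro s x
    rw [← mul_signedAbsCpow 0 hβ0, Complex.ofReal_sub]
    ring
  have hcross : ∀ c : ℂ, c * weightedIntegral₂ l m (fun s x => s * x * signedAbsCpow 0 β (s - x)) =
      weightedIntegral₂ l m fun s x => c * (s * x * signedAbsCpow 0 β (s - x)) :=
    fun c => (weightedIntegral₂_const_mul l m c _).symm
  have htotal : -β * (weightedIntegral₂ l m (fun s x => signedAbsCpow 0 β (s - x)) +
      weightedIntegral₂ l m (fun s x => s * x * signedAbsCpow 0 β (s - x))) =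
      (2 * l + 1) * weightedIntegral₂ l m (fun s x => s * x * signedAbsCpow 0 β (s - x)) +
        (2 * m + 1) * weightedIntegral₂ l m (fun s x => s * x * signedAbsCpow 0 β (s - x)) := by
    rw [← weightedIntegral₂_add hl hm (by fun_prop) (by fun_prop), ← weightedIntegral₂_const_mul]
    simp only [hsum]
    rw [weightedIntegral₂_add hl hm (by fun_prop) (by fun_prop), hleft, hright, hcross, hcross]
    congr 2 <;> ext s x <;> ring
  linear_combination -htotal

theorem weightedIntegral₂_add_one_left_signedAbsCpow (hl : -(1 / 2 : ℝ) < l.re)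
    (hm : -(1 / 2 : ℝ) < m.re) (hβ : 1 < β.re) :
    (β + 1) * weightedIntegral₂ (l + 1) m (fun s x => signedAbsCpow 0 β (s - x)) =
      (2 * l + 1) * (weightedIntegral₂ l m (fun s x => s ^ 2 * signedAbsCpow 0 β (s - x)) -
        weightedIntegral₂ l m (fun s x => s * x * signedAbsCpow 0 β (s - x))) := by
  have hβ0 : β ≠ 0 := by rintro rfl; norm_num at hβ
  have hk := continuous_signedAbsCpow 0 (zero_lt_one.trans hβ)
  have hd : ∀ s x : ℝ, HasDerivAt (fun s : ℝ => ((s - x : ℝ) : ℂ) * signedAbsCpow 0 β (s - x))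
      ((β + 1) * signedAbsCpow 0 β (s - x)) s := by
    intro s x
    convert! ((hasDerivAt_id s).sub_const x).ofReal_comp.mul
      ((hasDerivAt_signedAbsCpow 0 hβ (s - x)).comp_sub_const s x) using 1
    rw [id, mul_left_comm, mul_signedAbsCpow 0 hβ0, Complex.ofReal_one]
    ring
  rw [← weightedIntegral₂_const_mul, weightedIntegral₂_deriv_left hl hm
    (F := fun s x => ((s - x : ℝ) : ℂ) * signedAbsCpow 0 β (s - x)) (by fun_prop) (by fun_prop) hd,
    sub_eq_add_neg, neg_eq_neg_one_mul, ← weightedIntegral₂_const_mul,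
    ← weightedIntegral₂_add hl hm (by fun_prop) (by fun_prop), ← weightedIntegral₂_const_mul]
  congr 1; ext s x
  push_cast; ring

theorem weightedIntegral₂_add_one_left_mul (hl : -(1 / 2 : ℝ) < l.re)
    (hm : -(1 / 2 : ℝ) < m.re) (hβ : 1 < β.re) :
    (2 * l + 2 * m + 2 + β) * (2 * l + 2 + β) *
        weightedIntegral₂ (l + 1) m (fun s x => signedAbsCpow 0 β (s - x)) =
      (2 * l + 1) * (2 * l + 2 * m + 2 + 2 * β) *
        weightedIntegral₂ l m (fun s x => signedAbsCpow 0 β (s - x)) := by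
  have hk := continuous_signedAbsCpow 0 (zero_lt_one.trans hβ)
  have hcross := weightedIntegral₂_mul_mul_signedAbsCpow hl hm hβ
  have hstep := weightedIntegral₂_add_one_left_signedAbsCpow hl hm hβ
  have hsplit : weightedIntegral₂ (l + 1) m (fun s x => signedAbsCpow 0 β (s - x)) +
      weightedIntegral₂ l m (fun s x => s ^ 2 * signedAbsCpow 0 β (s - x)) =
      weightedIntegral₂ l m (fun s x => signedAbsCpow 0 β (s - x)) := by
    rw [weightedIntegral₂_add_one_left hl, ← weightedIntegral₂_add hl hm (by fun_prop)
      (by fun_prop)]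
    congr 1; ext s x
    ring
  linear_combination (2 * l + 2 * m + 2 + β) * hstep +
    (2 * l + 2 * m + 2 + β) * (2 * l + 1) * hsplit - (2 * l + 1) * hcross

end RieszIntegral

section GammaAsymptotics

theorem Gamma_add_natCast_succ_div_GammaSeq {a : ℂ} (ha : 0 < a.re) {n : ℕ} (hn : n ≠ 0) :
    Complex.Gamma a / Complex.GammaSeq a n =
      Complex.Gamma (a + (n + 1 : ℕ)) / ((n : ℂ) ^ a * n.factorial) := by
  have hn' : 0 < ((n : ℂ) + 1).re := by exact_mod_cast n.succ_pos
  have hpow : (n : ℂ) ^ a ≠ 0 := by simp [Complex.cpow_eq_zero_iff, hn]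
  have hΓ := Complex.Gamma_ne_zero_of_re_pos ha
  have hΓ' : Complex.Gamma (a + (n + 1)) ≠ 0 :=
    Complex.Gamma_ne_zero_of_re_pos (by rw [Complex.add_re]; exact add_pos ha hn')
  rw [Complex.GammaSeq_eq_betaIntegral_of_re_pos ha,
    Complex.betaIntegral_eq_Gamma_mul_div _ _ ha hn', Complex.Gamma_nat_eq_factorial, Nat.cast_succ]
  field_simp

theorem tendsto_Gamma_add_natCast_succ_div {a : ℂ} (ha : 0 < a.re) :
    Tendsto (fun n : ℕ => Complex.Gamma (a + (n + 1 : ℕ)) / ((n : ℂ) ^ a * n.factorial)) atTop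
      (𝓝 1) := by
  have hΓ := Complex.Gamma_ne_zero_of_re_pos ha
  have h := tendsto_const_nhds (x := Complex.Gamma a) |>.div (Complex.GammaSeq_tendsto_Gamma a) hΓ
  rw [div_self hΓ] at h
  exact h.congr' ((eventually_ne_atTop 0).mono fun n hn =>
    Gamma_add_natCast_succ_div_GammaSeq ha hn)

theorem tendsto_Gamma_mul_Gamma_div {a₁ a₂ b₁ b₂ : ℂ} (ha₁ : 0 < a₁.re) (ha₂ : 0 < a₂.re)
    (hb₁ : 0 < b₁.re) (hb₂ : 0 < b₂.re) (hsum : a₁ + a₂ = b₁ + b₂) :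
    Tendsto (fun n : ℕ => Complex.Gamma (a₁ + n) * Complex.Gamma (a₂ + n) /
      (Complex.Gamma (b₁ + n) * Complex.Gamma (b₂ + n))) atTop (𝓝 1) := by
  rw [← tendsto_add_atTop_iff_nat 1]
  have h := ((tendsto_Gamma_add_natCast_succ_div ha₁).mul
    (tendsto_Gamma_add_natCast_succ_div ha₂)).div ((tendsto_Gamma_add_natCast_succ_div hb₁).mul
    (tendsto_Gamma_add_natCast_succ_div hb₂)) (by norm_num)
  norm_num only at h
  refine h.congr' ((eventually_ne_atTop 0).mono fun n hn => ?_)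
  have hn' : (n : ℂ) ≠ 0 := Nat.cast_ne_zero.2 hn
  have hpow : (n : ℂ) ^ a₁ * (n : ℂ) ^ a₂ = (n : ℂ) ^ b₁ * (n : ℂ) ^ b₂ := by
    rw [← Complex.cpow_add _ _ hn', ← Complex.cpow_add _ _ hn', hsum]
  have hne : (n : ℂ) ^ b₁ * n.factorial * ((n : ℂ) ^ b₂ * n.factorial) ≠ 0 := by
    simp [hn, Nat.factorial_ne_zero, Complex.cpow_eq_zero_iff]
  simp only [Pi.div_apply]
  rw [div_mul_div_comm, div_mul_div_comm, mul_mul_mul_comm ((n : ℂ) ^ a₁), hpow,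
    mul_mul_mul_comm ((n : ℂ) ^ b₁) _ _ _, div_div_div_cancel_right₀]
  exact hne

end GammaAsymptotics

section Concentration

variable {l : ℂ}

theorem gegenbauerWeight_add_natCast (hl : -(1 / 2 : ℝ) < l.re) (n : ℕ) (x : ℝ) :
    gegenbauerWeight (l + n) x = (1 - x ^ 2) ^ n • gegenbauerWeight l x := by
  induction n with
  | zero => simp
  | succ n ih =>
    rw [Nat.cast_succ, ← add_assoc, gegenbauerWeight_add_one (neg_half_lt_add_natCast_re hl n), ih,
      Complex.real_smul, Complex.real_smul]
    push_cast; ring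

theorem weightedIntegral_add_natCast (hl : -(1 / 2 : ℝ) < l.re) (f : ℝ → ℂ) (n : ℕ) :
    weightedIntegral (l + n) f =
      ∫ x in Icc (-1 : ℝ) 1, (1 - x ^ 2) ^ n • (f x * gegenbauerWeight l x) := by
  rw [weightedIntegral_eq_setIntegral, integral_Icc_eq_integral_Ioc]
  simp only [gegenbauerWeight_add_natCast hl, mul_smul_comm]

theorem weightedIntegral_one (hl : -(1 / 2 : ℝ) < l.re) : weightedIntegral l (fun _ => 1) =
    (√Real.pi : ℂ) * Complex.Gamma (l + 1 / 2) / Complex.Gamma (l + 1) := by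
  simpa only [weightedIntegral, one_mul] using integral_gegenbauerWeight hl

theorem tendsto_inv_smul_weightedIntegral_add_natCast (hl : -(1 / 2 : ℝ) < l.re) {f : ℝ → ℂ}
    (hf : Continuous f) :
    Tendsto (fun n : ℕ => (∫ x in Icc (-1 : ℝ) 1, (1 - x ^ 2) ^ n)⁻¹ • weightedIntegral (l + n) f)
      atTop (𝓝 (f 0)) := by
  have hweight : gegenbauerWeight l 0 = 1 := by simp [gegenbauerWeight]
  have hcont : ContinuousAt (gegenbauerWeight l) 0 :=
    ContinuousAt.cpow (by fun_prop) continuousAt_const (by simp)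
  have hint : IntegrableOn (fun x => f x * gegenbauerWeight l x) (Icc (-1) 1) := by
    rw [integrableOn_Icc_iff_integrableOn_Ioc]
    exact (intervalIntegrable_mul_gegenbauerWeight hl hf).1
  have h := tendsto_setIntegral_pow_smul_of_unique_maximum_of_isCompact_of_integrableOn
    (μ := volume) (x₀ := (0 : ℝ)) (c := fun x => 1 - x ^ 2) isCompact_Icc (by fun_prop)
    (fun y _ hy => by simpa using sq_pos_of_ne_zero hy) (fun x hx => by nlinarith [hx.1, hx.2])
    (by norm_num) (by rw [interior_Icc]; exact subset_closure ⟨by norm_num, by norm_num⟩) hint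
    (hf.continuousAt.mul hcont).continuousWithinAt
  rw [hweight, mul_one] at h
  simpa only [weightedIntegral_add_natCast hl] using h

theorem tendsto_weightedIntegral_div_weightedIntegral_one (hl : -(1 / 2 : ℝ) < l.re) {f : ℝ → ℂ}
    (hf : Continuous f) :
    Tendsto (fun n : ℕ => weightedIntegral (l + n) f / weightedIntegral (l + n) fun _ => 1) atTop
      (𝓝 (f 0)) := by
  have hone := tendsto_inv_smul_weightedIntegral_add_natCast hl (f := fun _ => 1) continuous_const
  have h := (tendsto_inv_smul_weightedIntegral_add_natCast hl hf).div hone one_ne_zero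
  rw [div_one] at h
  refine h.congr' ((hone.eventually_ne one_ne_zero).mono fun n hn => ?_)
  rw [Pi.div_apply, Complex.real_smul, Complex.real_smul]
  rw [Complex.real_smul] at hn
  exact mul_div_mul_left _ _ (left_ne_zero_of_mul hn)

end Concentration

section AbsoluteMoment

variable {m s : ℂ}

theorem ascPochhammer_eval_mul_Gamma {a : ℂ} (ha : 0 < a.re) (n : ℕ) :
    (ascPochhammer ℂ n).eval a * Complex.Gamma a = Complex.Gamma (a + n) := by
  have ha' : ∀ k : ℕ, a ≠ -k := by
    rintro k rfl
    rw [Complex.neg_re, Complex.natCast_re] at ha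
    linarith [k.cast_nonneg (α := ℝ)]
  rw [← Complex.Gamma_add_nat_div_Gamma_eq a ha',
    div_mul_cancel₀ _ (Complex.Gamma_ne_zero_of_re_pos ha)]

theorem sqrt_pi_mul_ascPochhammer_eval_one_half (n : ℕ) :
    (√Real.pi : ℂ) * (ascPochhammer ℂ n).eval (1 / 2) = Complex.Gamma (n + 1 / 2) := by
  have hΓ : Complex.Gamma (1 / 2) = (√Real.pi : ℝ) := by
    rw [← Real.Gamma_one_half_eq, ← Complex.Gamma_ofReal]; push_cast; rfl
  rw [← hΓ, mul_comm, ascPochhammer_eval_mul_Gamma (by rw [one_half_re]; norm_num), add_comm]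

theorem integral_cpow_mul_inv_sqrt_mul_cpow (hm : -(1 / 2 : ℝ) < m.re)
    (hs : -(1 / 2 : ℝ) < s.re) :
    ∫ y in Ioc (0 : ℝ) 1,
        (y : ℂ) ^ s * ((y : ℂ) ^ (-(1 / 2) : ℂ) * ((1 - y : ℝ) : ℂ) ^ (m - 1 / 2)) =
      Complex.Gamma (s + 1 / 2) * Complex.Gamma (m + 1 / 2) / Complex.Gamma (m + s + 1) := by
  have hcombine : ∀ y ∈ Ioc (0 : ℝ) 1,
      (y : ℂ) ^ s * ((y : ℂ) ^ (-(1 / 2) : ℂ) * ((1 - y : ℝ) : ℂ) ^ (m - 1 / 2)) =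
        (y : ℂ) ^ (s - 1 / 2) * ((1 - y : ℝ) : ℂ) ^ (m - 1 / 2) := fun y hy => by
    rw [← mul_assoc, ← Complex.cpow_add _ _ (by exact_mod_cast hy.1.ne'), sub_eq_add_neg s]
  rw [setIntegral_congr_fun measurableSet_Ioc hcombine, ← integral_of_le zero_le_one,
    integral_cpow_mul_one_sub_cpow (by rw [Complex.sub_re, one_half_re]; linarith)
      (by rw [Complex.sub_re, one_half_re]; linarith)]
  congr 2 <;> ring_nf

theorem weightedIntegral_abs_cpow (hm : -(1 / 2 : ℝ) < m.re) (hs : 0 < s.re) :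
    weightedIntegral m (fun x => ((|x| : ℝ) : ℂ) ^ (2 * s)) =
      Complex.Gamma (s + 1 / 2) * Complex.Gamma (m + 1 / 2) / Complex.Gamma (m + s + 1) := by
  have hint : IntegrableOn (fun y : ℝ => (y : ℂ) ^ (-(1 / 2) : ℂ) * ((1 - y : ℝ) : ℂ) ^ (m - 1 / 2))
      (Ioc 0 1) :=
    (intervalIntegrable_cpow_mul_one_sub_cpow (by rw [Complex.neg_re, one_half_re]; norm_num)
      (by rw [Complex.sub_re, one_half_re]; linarith)).1
  have hmom (n : ℕ) : ∫ x in Ioc (-1 : ℝ) 1, ((x ^ 2 : ℝ) : ℂ) ^ n * gegenbauerWeight m x =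
      ∫ y in Ioc (0 : ℝ) 1,
        (y : ℂ) ^ n * ((y : ℂ) ^ (-(1 / 2) : ℂ) * ((1 - y : ℝ) : ℂ) ^ (m - 1 / 2)) := by
    have hbeta := integral_cpow_mul_inv_sqrt_mul_cpow hm (s := n)
      (by rw [Complex.natCast_re]; linarith [n.cast_nonneg (α := ℝ)])
    simp only [Complex.cpow_natCast] at hbeta
    rw [hbeta, ← sqrt_pi_mul_ascPochhammer_eval_one_half, ← weightedIntegral_pow_two_mul hm,
      weightedIntegral_eq_setIntegral]
    simp only [Complex.ofReal_pow, pow_mul]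
  have htransfer := integral_comp_mul_eq_of_moments (a := 0) (b := 1)
    (intervalIntegrable_gegenbauerWeight hm).1 (φ := fun x => x ^ 2) (by fun_prop)
    ((ae_restrict_mem measurableSet_Ioc).mono fun x hx =>
      ⟨sq_nonneg x, by nlinarith [hx.1, hx.2]⟩)
    hint (ψ := fun y => y) (by fun_prop)
    ((ae_restrict_mem measurableSet_Ioc).mono fun y hy => Ioc_subset_Icc_self hy) hmom
    ((Complex.continuous_ofReal_cpow_const hs).comp continuous_abs)
  have hsq (x : ℝ) : ((|x ^ 2| : ℝ) : ℂ) ^ s = ((|x| : ℝ) : ℂ) ^ (2 * s) := by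
    have harg : Complex.arg (|x| : ℝ) = 0 := Complex.arg_ofReal_of_nonneg (abs_nonneg x)
    rw [abs_pow, Complex.ofReal_pow, Complex.cpow_ofNat_mul'] <;>
      rw [harg, mul_zero] <;> linarith [Real.pi_pos]
  simp only [Function.comp_def, hsq, ← weightedIntegral_eq_setIntegral] at htransfer
  rw [htransfer, ← integral_cpow_mul_inv_sqrt_mul_cpow hm (by linarith)]
  refine setIntegral_congr_fun measurableSet_Ioc fun y hy => ?_
  rw [abs_of_pos hy.1]

end AbsoluteMoment

section RieszEvaluation

variable {l m ν : ℂ}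

/-- The Gamma quotient giving the value of the double integral of the Riesz kernel
`|s - x|^{2ν}` against two Gegenbauer weights. -/
noncomputable def rieszGamma (l m ν : ℂ) : ℂ :=
  (√Real.pi : ℂ) * Complex.Gamma (l + 1 / 2) * Complex.Gamma (m + 1 / 2) *
      Complex.Gamma (ν + 1 / 2) * Complex.Gamma (l + m + 2 * ν + 1) /
    (Complex.Gamma (l + m + ν + 1) * Complex.Gamma (l + ν + 1) * Complex.Gamma (m + ν + 1))

theorem add_add_add_one_re_pos (hl : -(1 / 2 : ℝ) < l.re) (hm : -(1 / 2 : ℝ) < m.re)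
    (hν : 0 < ν.re) : 0 < (l + m + ν + 1).re := by
  simp only [Complex.add_re, Complex.one_re]; linarith

theorem add_add_one_re_pos (hl : -(1 / 2 : ℝ) < l.re) (hν : 0 < ν.re) : 0 < (l + ν + 1).re := by
  simp only [Complex.add_re, Complex.one_re]; linarith

theorem two_mul_re_pos (hν : 0 < ν.re) : 0 < (2 * ν).re := by
  rw [two_mul, Complex.add_re]; linarith

theorem rieszGamma_add_one (hl : -(1 / 2 : ℝ) < l.re) (hm : -(1 / 2 : ℝ) < m.re) (hν : 0 < ν.re) :
    (l + m + ν + 1) * (l + ν + 1) * rieszGamma (l + 1) m ν =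
      (l + 1 / 2) * (l + m + 2 * ν + 1) * rieszGamma l m ν := by
  have h₁ := Complex.ne_zero_of_re_pos (add_add_add_one_re_pos hl hm hν)
  have h₂ := Complex.ne_zero_of_re_pos (add_add_one_re_pos hl hν)
  have h₃ := Complex.ne_zero_of_re_pos (add_add_add_one_re_pos hl hm (two_mul_re_pos hν))
  rw [rieszGamma, rieszGamma, show l + 1 + 1 / 2 = l + 1 / 2 + 1 by ring,
    show l + 1 + m + 2 * ν + 1 = l + m + 2 * ν + 1 + 1 by ring,
    show l + 1 + m + ν + 1 = l + m + ν + 1 + 1 by ring,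
    show l + 1 + ν + 1 = l + ν + 1 + 1 by ring, Complex.Gamma_add_one _ (add_one_half_ne_zero hl),
    Complex.Gamma_add_one _ h₁, Complex.Gamma_add_one _ h₂, Complex.Gamma_add_one _ h₃]
  generalize Complex.Gamma (l + m + ν + 1) = Γ₁
  generalize Complex.Gamma (l + ν + 1) = Γ₂
  generalize Complex.Gamma (m + ν + 1) = Γ₃
  rw [show (l + m + ν + 1) * Γ₁ * ((l + ν + 1) * Γ₂) * Γ₃ =
    (l + m + ν + 1) * (l + ν + 1) * (Γ₁ * Γ₂ * Γ₃) by ring, mul_div_assoc', mul_div_mul_left _ _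
    (mul_ne_zero h₁ h₂)]
  ring

theorem tendsto_rieszGamma_div_weightedIntegral_one (hl : -(1 / 2 : ℝ) < l.re)
    (hm : -(1 / 2 : ℝ) < m.re) (hν : 0 < ν.re) :
    Tendsto (fun n : ℕ => rieszGamma (l + n) m ν / weightedIntegral (l + n) fun _ => 1) atTop
      (𝓝 (weightedIntegral m fun x => ((|x| : ℝ) : ℂ) ^ (2 * ν))) := by
  rw [weightedIntegral_abs_cpow hm hν]
  have hratio := tendsto_Gamma_mul_Gamma_div (a₂ := l + 1)
    (add_add_add_one_re_pos hl hm (two_mul_re_pos hν)) (by linarith [half_lt_add_one_re hl])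
    (add_add_add_one_re_pos hl hm hν) (add_add_one_re_pos hl hν) (by ring)
  have h := hratio.const_mul
    (Complex.Gamma (ν + 1 / 2) * Complex.Gamma (m + 1 / 2) / Complex.Gamma (m + ν + 1))
  rw [mul_one] at h
  refine h.congr fun n => ?_
  have hln := neg_half_lt_add_natCast_re hl n
  have hpi : (√Real.pi : ℂ) ≠ 0 := by exact_mod_cast (Real.sqrt_pos.2 Real.pi_pos).ne'
  have hΓ := Complex.Gamma_ne_zero_of_re_pos (add_one_half_re_pos hln)
  rw [weightedIntegral_one hln, rieszGamma,
    show l + m + 2 * ν + 1 + n = l + n + m + 2 * ν + 1 by ring,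
    show l + m + ν + 1 + n = l + n + m + ν + 1 by ring, add_right_comm l 1,
    show l + ν + 1 + n = l + n + ν + 1 by ring, div_div_div_eq, div_mul_div_comm]
  generalize Complex.Gamma (l + n + 1 / 2) = Γ₀ at *
  rw [← mul_div_mul_left _ _ (mul_ne_zero hpi hΓ)]
  congr 1 <;> ring

theorem weightedIntegral₂_mul_rieszGamma (hl : -(1 / 2 : ℝ) < l.re) (hm : -(1 / 2 : ℝ) < m.re)
    (hν : 1 / 2 < ν.re) (n : ℕ) :
    weightedIntegral₂ (l + n) m (fun s x => signedAbsCpow 0 (2 * ν) (s - x)) * rieszGamma l m ν =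
      weightedIntegral₂ l m (fun s x => signedAbsCpow 0 (2 * ν) (s - x)) *
        rieszGamma (l + n) m ν := by
  have hν₀ : 0 < ν.re := by linarith
  induction n with
  | zero => simp
  | succ n ih =>
    have hln := neg_half_lt_add_natCast_re hl n
    have hJ := weightedIntegral₂_add_one_left_mul hln hm (β := 2 * ν)
      (by rw [two_mul, Complex.add_re]; linarith)
    have hR := rieszGamma_add_one hln hm hν₀
    have hne : (l + n + m + ν + 1) * (l + n + ν + 1) ≠ 0 :=
      mul_ne_zero (Complex.ne_zero_of_re_pos (add_add_add_one_re_pos hln hm hν₀))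
        (Complex.ne_zero_of_re_pos (add_add_one_re_pos hln hν₀))
    rw [Nat.cast_succ, ← add_assoc]
    apply mul_left_cancel₀ hne
    linear_combination rieszGamma l m ν / 4 * hJ -
      weightedIntegral₂ l m (fun s x => signedAbsCpow 0 (2 * ν) (s - x)) * hR +
      (l + n + 1 / 2) * (l + n + m + 2 * ν + 1) * ih

-- Both sides satisfy the same recurrence in `l`, and as `l → ∞` along the integers the weight
-- concentrates at the origin, so that both are asymptotic to `∫ W_l · ∫ |x|^{2ν} W_m`.
theorem weightedIntegral₂_signedAbsCpow (hl : -(1 / 2 : ℝ) < l.re) (hm : -(1 / 2 : ℝ) < m.re)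
    (hν : 1 / 2 < ν.re) :
    weightedIntegral₂ l m (fun s x => signedAbsCpow 0 (2 * ν) (s - x)) = rieszGamma l m ν := by
  have hν₀ : 0 < ν.re := by linarith
  have hk := continuous_signedAbsCpow 0 (two_mul_re_pos hν₀)
  have hk₂ : Continuous (Function.uncurry fun s x : ℝ => signedAbsCpow 0 (2 * ν) (s - x)) := by
    fun_prop
  have hJ := tendsto_weightedIntegral_div_weightedIntegral_one hl
    (continuous_weightedIntegral hm hk₂)
  have hzero (x : ℝ) : signedAbsCpow 0 (2 * ν) (0 - x) = ((|x| : ℝ) : ℂ) ^ (2 * ν) := by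
    rw [signedAbsCpow_zero_left, zero_sub, abs_neg]
  simp only [hzero] at hJ
  have hR := tendsto_rieszGamma_div_weightedIntegral_one hl hm hν₀
  have hlim : weightedIntegral m (fun x => ((|x| : ℝ) : ℂ) ^ (2 * ν)) ≠ 0 := by
    rw [weightedIntegral_abs_cpow hm hν₀]
    exact div_ne_zero (mul_ne_zero (Complex.Gamma_ne_zero_of_re_pos
      (add_one_half_re_pos (by linarith)))
      (Complex.Gamma_ne_zero_of_re_pos (add_one_half_re_pos hm)))
      (Complex.Gamma_ne_zero_of_re_pos (add_add_one_re_pos hm hν₀))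
  refine mul_left_cancel₀ hlim (tendsto_nhds_unique
    ((hR.mul_const _).congr fun n => ?_) (hJ.mul_const (rieszGamma l m ν)))
  rw [← weightedIntegral₂_eq (neg_half_lt_add_natCast_re hl n) hm hk₂, div_mul_eq_mul_div,
    div_mul_eq_mul_div, weightedIntegral₂_mul_rieszGamma hl hm hν, mul_comm]

end RieszEvaluation

section RodriguesRieszEvaluation

variable {l m ν : ℂ} {p q N : ℕ}

/-- The value of the double integral of the Riesz kernel `|s - x|^{2ν}` against two Gegenbauer
weights and two Rodrigues polynomials of degrees `p` and `q`, where `p + q = 2N`. Reciprocal Gamma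
functions make it manifestly holomorphic in `ν`. -/
noncomputable def rodriguesRieszGamma (p q N : ℕ) (l m ν : ℂ) : ℂ :=
  (√Real.pi : ℂ) * 4 ^ N * (-1) ^ (q + N) * (ascPochhammer ℂ N).eval (-ν) *
      Complex.Gamma (l + p + 1 / 2) * Complex.Gamma (m + q + 1 / 2) *
      Complex.Gamma (ν + 1 / 2) * Complex.Gamma (l + m + 2 * ν + 1) *
    ((Complex.Gamma (l + m + ν + N + 1))⁻¹ * (Complex.Gamma (l + p + ν - N + 1))⁻¹ *
      (Complex.Gamma (m + q + ν - N + 1))⁻¹)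

theorem descPochhammer_eval_mul_Gamma (hν : (N : ℝ) - 1 / 2 < ν.re) :
    (descPochhammer ℂ (2 * N)).eval (2 * ν) * Complex.Gamma (ν - N + 1 / 2) =
      4 ^ N * (-1) ^ N * (ascPochhammer ℂ N).eval (-ν) * Complex.Gamma (ν + 1 / 2) := by
  induction N with
  | zero => simp
  | succ N ih =>
    push_cast at hν
    have hne : ν - (N + 1 : ℕ) + 1 / 2 ≠ 0 := Complex.ne_zero_of_re_pos (by
      rw [Complex.add_re, Complex.sub_re, Complex.natCast_re, one_half_re]; push_cast; linarith)
    have hΓ := Complex.Gamma_add_one _ hne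
    rw [show ν - (N + 1 : ℕ) + 1 / 2 + 1 = ν - N + 1 / 2 by push_cast; ring] at hΓ
    specialize ih (by linarith)
    rw [hΓ] at ih
    rw [show 2 * (N + 1) = 2 * N + 1 + 1 by ring, descPochhammer_succ_eval,
      descPochhammer_succ_eval, ascPochhammer_succ_eval]
    push_cast at ih ⊢
    linear_combination (4 * (ν - N)) * ih

theorem iteratedDeriv_two_mul_signedAbsCpow (hν : (N : ℝ) < ν.re) (u : ℝ) :
    iteratedDeriv (2 * N) (signedAbsCpow 0 (2 * ν)) u =
      (descPochhammer ℂ (2 * N)).eval (2 * ν) * signedAbsCpow 0 (2 * (ν - N)) u := by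
  have hν' : ((2 * N : ℕ) : ℝ) < (2 * ν).re := by
    rw [two_mul ν, Complex.add_re]; push_cast; linarith
  have hne : 2 * ν - (2 * N : ℕ) ≠ 0 := Complex.ne_zero_of_re_pos (by
    rw [Complex.sub_re, Complex.natCast_re]; linarith)
  rw [iteratedDeriv_signedAbsCpow 0 hν', zero_add]
  beta_reduce
  rw [signedAbsCpow_two_mul N hne, signedAbsCpow_zero_left, Nat.cast_mul, Nat.cast_two, mul_sub]

theorem weightedIntegral₂_signedAbsCpow_mul_rodriguesPoly_of_lt (hpq : p + q = 2 * N)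
    (hl : -(1 / 2 : ℝ) < l.re) (hm : -(1 / 2 : ℝ) < m.re) (hν : N + 1 / 2 < ν.re) :
    weightedIntegral₂ l m (fun s x => signedAbsCpow 0 (2 * ν) (s - x) *
        ((rodriguesPoly p l).eval (s : ℂ) * (rodriguesPoly q m).eval (x : ℂ))) =
      rodriguesRieszGamma p q N l m ν := by
  have hpq' : (p : ℂ) + q = 2 * N := by exact_mod_cast hpq
  have hν₁ : ((p + q : ℕ) : ℝ) < (2 * ν).re := by
    rw [hpq, two_mul ν, Complex.add_re]; push_cast; linarith
  have hν₂ : 1 / 2 < (ν - N).re := by rw [Complex.sub_re, Complex.natCast_re]; linarith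
  rw [weightedIntegral₂_mul_rodriguesPoly_mul_rodriguesPoly hl hm (contDiff_signedAbsCpow 0 hν₁),
    hpq]
  simp only [iteratedDeriv_two_mul_signedAbsCpow (show (N : ℝ) < ν.re by linarith)]
  rw [weightedIntegral₂_const_mul, weightedIntegral₂_signedAbsCpow
    (neg_half_lt_add_natCast_re hl p) (neg_half_lt_add_natCast_re hm q) hν₂, rieszGamma,
    rodriguesRieszGamma, pow_add,
    show l + p + (m + q) + 2 * (ν - N) + 1 = l + m + 2 * ν + 1 by linear_combination hpq',
    show l + p + (m + q) + (ν - N) + 1 = l + m + ν + N + 1 by linear_combination hpq',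
    ← add_sub_assoc, ← add_sub_assoc, div_eq_mul_inv, mul_inv, mul_inv]
  linear_combination (-1) ^ q * (√Real.pi : ℂ) * Complex.Gamma (l + p + 1 / 2) *
    Complex.Gamma (m + q + 1 / 2) * Complex.Gamma (l + m + 2 * ν + 1) *
    ((Complex.Gamma (l + m + ν + N + 1))⁻¹ * (Complex.Gamma (l + p + ν - N + 1))⁻¹ *
      (Complex.Gamma (m + q + ν - N + 1))⁻¹) *
    descPochhammer_eval_mul_Gamma (N := N) (ν := ν) (by linarith)

end RodriguesRieszEvaluation

section HolomorphicDependence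

variable {α : Type*} [MeasurableSpace α] {μ : Measure α} {r : α → ℝ} {G : α → ℂ} {R : ℝ} {w : ℂ}

theorem norm_cpow_mul_log_le {ε M x : ℝ} (hε : 0 < ε) (hx : 0 ≤ x) (hxR : x ≤ R) (hεw : ε ≤ w.re)
    (hwM : w.re ≤ M) : ‖(x : ℂ) ^ w * Complex.log x‖ ≤ 1 / ε + R ^ M * R := by
  have hR : 0 ≤ R := hx.trans hxR
  rcases hx.eq_or_lt with rfl | hx'
  · rw [Complex.ofReal_zero, Complex.log_zero, mul_zero, norm_zero]
    positivity
  rw [norm_mul, Complex.norm_cpow_eq_rpow_re_of_pos hx', ← Complex.ofReal_log hx,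
    Complex.norm_real, Real.norm_eq_abs]
  rcases le_total x 1 with hx₁ | hx₁
  · calc x ^ w.re * |Real.log x| ≤ x ^ ε * |Real.log x| := by
          gcongr ?_ * _
          exact Real.rpow_le_rpow_of_exponent_ge hx' hx₁ hεw
      _ = |Real.log x * x ^ ε| := by
          rw [abs_mul, abs_of_nonneg (Real.rpow_nonneg hx ε), mul_comm]
      _ ≤ 1 / ε := (Real.abs_log_mul_self_rpow_lt x ε hx' hx₁ hε).le
      _ ≤ 1 / ε + R ^ M * R := le_add_of_nonneg_right (by positivity)
  · calc x ^ w.re * |Real.log x| ≤ x ^ M * R := by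
          gcongr
          rw [abs_of_nonneg (Real.log_nonneg hx₁)]
          exact (Real.log_le_self hx).trans hxR
      _ ≤ R ^ M * R := by
          gcongr
          exact (hε.trans_le hεw).le.trans hwM
      _ ≤ 1 / ε + R ^ M * R := le_add_of_nonneg_left (by positivity)

theorem differentiableAt_integral_cpow_mul (hr : AEMeasurable r μ)
    (hr₀ : ∀ᵐ z ∂μ, 0 ≤ r z) (hrR : ∀ᵐ z ∂μ, r z ≤ R) (hG : Integrable G μ) (hw : 0 < w.re) :
    DifferentiableAt ℂ (fun v => ∫ z, (r z : ℂ) ^ v * G z ∂μ) w := by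
  have hball {v : ℂ} (hv : v ∈ Metric.ball w (w.re / 2)) :
      w.re / 2 ≤ v.re ∧ v.re ≤ w.re + w.re / 2 := by
    have h := (Complex.abs_re_le_norm (v - w)).trans (mem_ball_iff_norm.1 hv).le
    rw [Complex.sub_re, abs_le] at h
    constructor <;> linarith [h.1, h.2]
  have hcpow (v : ℂ) : AEStronglyMeasurable (fun z => (r z : ℂ) ^ v) μ :=
    (hr.complex_ofReal.pow_const v).aestronglyMeasurable
  have hlog : AEStronglyMeasurable (fun z => Complex.log (r z)) μ :=
    (Complex.measurable_log.comp_aemeasurable hr.complex_ofReal).aestronglyMeasurable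
  refine (hasDerivAt_integral_of_dominated_loc_of_deriv_le (𝕜 := ℂ)
    (F' := fun v z => (r z : ℂ) ^ v * Complex.log (r z) * G z)
    (bound := fun z => (1 / (w.re / 2) + R ^ (w.re + w.re / 2) * R) * ‖G z‖)
    (Metric.ball_mem_nhds w (half_pos hw)) (Eventually.of_forall fun v => (hcpow v).mul hG.1)
    (hG.bdd_mul (c := R ^ w.re) (hcpow w) ?_) (((hcpow w).mul hlog).mul hG.1) ?_
    (hG.norm.const_mul _) ?_).2.differentiableAt
  · filter_upwards [hr₀, hrR] with z h₀ h₁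
    rw [Complex.norm_cpow_eq_rpow_re_of_nonneg h₀ hw.ne']
    gcongr
  · filter_upwards [hr₀, hrR] with z h₀ h₁ v hv
    rw [norm_mul]
    gcongr
    exact norm_cpow_mul_log_le (half_pos hw) h₀ h₁ (hball hv).1 (hball hv).2
  · refine Eventually.of_forall fun z v hv => HasDerivAt.mul_const ?_ _
    have hv₀ : v ≠ 0 := Complex.ne_zero_of_re_pos (by linarith [(hball hv).1])
    simpa using (hasDerivAt_id v).const_cpow (c := (r z : ℂ)) (Or.inr hv₀)

end HolomorphicDependence

section Continuation

variable {l m ν : ℂ} {p q N : ℕ}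

theorem differentiableAt_weightedIntegral₂_signedAbsCpow_mul (hl : -(1 / 2 : ℝ) < l.re)
    (hm : -(1 / 2 : ℝ) < m.re) {F : ℝ → ℝ → ℂ} (hF : Continuous (Function.uncurry F))
    (hν : 0 < ν.re) :
    DifferentiableAt ℂ
      (fun w => weightedIntegral₂ l m fun s x => signedAbsCpow 0 (2 * w) (s - x) * F s x) ν := by
  have hr : Continuous fun z : ℝ × ℝ => |z.1 - z.2| := by fun_prop
  have hR : ∀ᵐ z ∂(volume.restrict (Ioc (-1 : ℝ) 1)).prod (volume.restrict (Ioc (-1 : ℝ) 1)),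
      |z.1 - z.2| ≤ 2 := by
    rw [Measure.prod_restrict]
    refine ae_restrict_of_forall_mem (measurableSet_Ioc.prod measurableSet_Ioc) fun z hz => ?_
    rw [abs_le]
    constructor <;> linarith [hz.1.1, hz.1.2, hz.2.1, hz.2.2]
  have h := (differentiableAt_integral_cpow_mul hr.aemeasurable
    (Eventually.of_forall fun z => abs_nonneg _) hR (integrable_mul_gegenbauerWeight_mul hl hm hF)
    (two_mul_re_pos hν)).comp ν ((differentiableAt_id (𝕜 := ℂ)).const_mul 2)
  simpa only [weightedIntegral₂, signedAbsCpow_zero_left, mul_assoc,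
    Function.comp_def] using h

theorem differentiableAt_rodriguesRieszGamma (hl : -(1 / 2 : ℝ) < l.re)
    (hm : -(1 / 2 : ℝ) < m.re) (hν : 0 < ν.re) :
    DifferentiableAt ℂ (rodriguesRieszGamma p q N l m) ν := by
  have hΓ {f : ℂ → ℂ} (hf : DifferentiableAt ℂ f ν) (h : 0 < (f ν).re) :
      DifferentiableAt ℂ (fun w => Complex.Gamma (f w)) ν :=
    (Complex.differentiableAt_Gamma _ fun n hn => by
      rw [hn, Complex.neg_re, Complex.natCast_re] at h
      linarith [n.cast_nonneg (α := ℝ)]).comp ν hf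
  have hΓ' {f : ℂ → ℂ} (hf : DifferentiableAt ℂ f ν) :
      DifferentiableAt ℂ (fun w => (Complex.Gamma (f w))⁻¹) ν :=
    (Complex.differentiable_one_div_Gamma (f ν)).comp ν hf
  have hasc : DifferentiableAt ℂ (fun w => (ascPochhammer ℂ N).eval (-w)) ν :=
    ((ascPochhammer ℂ N).differentiable (-ν)).comp ν differentiableAt_id.neg
  have h₁ := hΓ (f := fun w => w + 1 / 2) (by fun_prop) (add_one_half_re_pos (by linarith))
  have h₂ := hΓ (f := fun w => l + m + 2 * w + 1) (by fun_prop)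
    (add_add_add_one_re_pos hl hm (two_mul_re_pos hν))
  have h₃ := ((hΓ' (f := fun w => l + m + w + N + 1) (by fun_prop)).mul
    (hΓ' (f := fun w => l + p + w - N + 1) (by fun_prop))).mul
    (hΓ' (f := fun w => m + q + w - N + 1) (by fun_prop))
  exact (((((hasc.const_mul _).mul_const _).mul_const _).mul h₁).mul h₂).mul h₃

theorem weightedIntegral₂_signedAbsCpow_mul_rodriguesPoly (hpq : p + q = 2 * N)
    (hl : -(1 / 2 : ℝ) < l.re) (hm : -(1 / 2 : ℝ) < m.re) (hν : 0 < ν.re) :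
    weightedIntegral₂ l m (fun s x => signedAbsCpow 0 (2 * ν) (s - x) *
        ((rodriguesPoly p l).eval (s : ℂ) * (rodriguesPoly q m).eval (x : ℂ))) =
      rodriguesRieszGamma p q N l m ν := by
  have hopen : IsOpen {w : ℂ | 0 < w.re} := isOpen_lt continuous_const Complex.continuous_re
  have hleft := DifferentiableOn.analyticOnNhd (fun w hw =>
    (differentiableAt_weightedIntegral₂_signedAbsCpow_mul hl hm
      (F := fun s x => (rodriguesPoly p l).eval (s : ℂ) * (rodriguesPoly q m).eval (x : ℂ))
      (by fun_prop) hw).differentiableWithinAt) hopen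
  have hright := DifferentiableOn.analyticOnNhd (fun w hw =>
    (differentiableAt_rodriguesRieszGamma (p := p) (q := q) (N := N) hl hm
      hw).differentiableWithinAt) hopen
  have hmem : (N : ℂ) + 1 ∈ {w : ℂ | 0 < w.re} := by
    rw [mem_ofPred_eq, Complex.add_re, Complex.natCast_re, Complex.one_re]; positivity
  refine hleft.eqOn_of_preconnected_of_eventuallyEq hright
    (convex_halfSpace_re_gt 0).isPreconnected hmem ?_ hν
  have hlarge : {w : ℂ | N + 1 / 2 < w.re} ∈ 𝓝 ((N : ℂ) + 1) :=
    (isOpen_lt continuous_const Complex.continuous_re).mem_nhds (by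
      rw [mem_ofPred_eq, Complex.add_re, Complex.natCast_re, Complex.one_re]; norm_num)
  filter_upwards [hlarge] with w hw
  exact weightedIntegral₂_signedAbsCpow_mul_rodriguesPoly_of_lt hpq hl hm hw

end Continuation

section TripleIntegral

variable {l m b ν : ℂ} {p q N : ℕ}

/-- The constant relating `gegenbauer l n` to the Rodrigues polynomial of degree `n`. -/
noncomputable def rodriguesCoeff (n : ℕ) (l : ℂ) : ℂ :=
  (ascPochhammer ℂ n).eval (2 * l) * Complex.Gamma (l + 1 / 2) /
    (2 ^ n * n.factorial * Complex.Gamma (l + n + 1 / 2))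

theorem gegenbauer_eq_rodriguesCoeff_mul (hl : -(1 / 2 : ℝ) < l.re) (n : ℕ) (x : ℂ) :
    gegenbauer l n x = rodriguesCoeff n l * (rodriguesPoly n l).eval x := by
  have h := congrArg (eval x) (gegenbauerPoly_eq_rodriguesPoly hl n)
  have hasc := ascPochhammer_eval_mul_Gamma (add_one_half_re_pos hl) n
  have hΓ := Complex.Gamma_ne_zero_of_re_pos
    (add_one_half_re_pos (neg_half_lt_add_natCast_re hl n))
  have hn : (n.factorial : ℂ) ≠ 0 := by exact_mod_cast n.factorial_ne_zero
  rw [eval_C_mul, eval_C_mul, eval_gegenbauerPoly] at h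
  rw [add_right_comm] at hasc
  rw [rodriguesCoeff, div_mul_eq_mul_div,
    eq_div_iff (mul_ne_zero (mul_ne_zero (pow_ne_zero _ two_ne_zero) hn) hΓ), ← hasc]
  linear_combination Complex.Gamma (l + 1 / 2) * h

theorem rodriguesCoeff_mul_Gamma (hl : -(1 / 2 : ℝ) < l.re) (n : ℕ) :
    rodriguesCoeff n l * (2 ^ n * Complex.Gamma (l + n + 1 / 2)) =
      (ascPochhammer ℂ n).eval (2 * l) * Complex.Gamma (l + 1 / 2) / n.factorial := by
  have hΓ := Complex.Gamma_ne_zero_of_re_pos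
    (add_one_half_re_pos (neg_half_lt_add_natCast_re hl n))
  rw [rodriguesCoeff, mul_right_comm (2 ^ n : ℂ), div_mul_eq_mul_div, mul_comm (_ * _ : ℂ) (_ * _),
    mul_div_mul_left _ _ (mul_ne_zero (pow_ne_zero n two_ne_zero) hΓ)]

theorem integral_integral_comp_mul_sqrt_mul_gegenbauer {g : ℝ → ℂ} (hm : -(1 / 2 : ℝ) < m.re)
    (hb : -1 < b.re) (hg : Continuous g) :
    ∫ t in (-1 : ℝ)..1, ∫ y in (0 : ℝ)..1, g (t * √y) * gegenbauer m q t *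
        ((y : ℂ) ^ (m + (q : ℂ) / 2) * ((1 - y : ℝ) : ℂ) ^ b) * gegenbauerWeight m t =
      rodriguesCoeff q m * (Complex.Gamma (m + q + 1 / 2) * Complex.Gamma (b + 1) /
          Complex.Gamma (m + b + 1 + q + 1 / 2)) *
        weightedIntegral (m + b + 1)
          (fun x => g x * (rodriguesPoly q (m + b + 1)).eval (x : ℂ)) := by
  rw [mul_assoc, ← integral_integral_comp_mul_sqrt hm hb q hg,
    ← intervalIntegral.integral_const_mul]
  refine integral_congr fun t _ => ?_
  rw [← intervalIntegral.integral_const_mul]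
  refine integral_congr fun y _ => ?_
  rw [gegenbauer_eq_rodriguesCoeff_mul hm]
  ring

theorem integral_integral_integral_comp_mul_sqrt_mul_gegenbauer {F : ℝ → ℝ → ℂ}
    (hl : -(1 / 2 : ℝ) < l.re) (hm : -(1 / 2 : ℝ) < m.re) (hb : -1 < b.re)
    (hF : Continuous (Function.uncurry F)) :
    ∫ s in (-1 : ℝ)..1, ∫ t in (-1 : ℝ)..1, ∫ y in (0 : ℝ)..1,
        F s (t * √y) * gegenbauer l p s * gegenbauer m q t *
          ((y : ℂ) ^ (m + (q : ℂ) / 2) * ((1 - y : ℝ) : ℂ) ^ b) *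
          gegenbauerWeight l s * gegenbauerWeight m t =
      rodriguesCoeff p l * (rodriguesCoeff q m *
          (Complex.Gamma (m + q + 1 / 2) * Complex.Gamma (b + 1) /
            Complex.Gamma (m + b + 1 + q + 1 / 2))) *
        weightedIntegral₂ l (m + b + 1) fun s x => F s x *
          ((rodriguesPoly p l).eval (s : ℂ) * (rodriguesPoly q (m + b + 1)).eval (x : ℂ)) := by
  have hmb := neg_half_lt_add_add_one_re hm hb
  have hFQ : Continuous (Function.uncurry fun s x : ℝ => F s x *
      ((rodriguesPoly p l).eval (s : ℂ) * (rodriguesPoly q (m + b + 1)).eval (x : ℂ))) :=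
    hF.mul (by fun_prop)
  rw [weightedIntegral₂_eq hl hmb hFQ, weightedIntegral, ← intervalIntegral.integral_const_mul]
  refine integral_congr fun s _ => ?_
  have hs := integral_integral_comp_mul_sqrt_mul_gegenbauer (q := q) hm hb
    (hF.comp (Continuous.prodMk_right s))
  have hx (x : ℝ) : F s x * ((rodriguesPoly p l).eval (s : ℂ) *
      (rodriguesPoly q (m + b + 1)).eval (x : ℂ)) = (rodriguesPoly p l).eval (s : ℂ) *
        (F s x * (rodriguesPoly q (m + b + 1)).eval (x : ℂ)) := mul_left_comm _ _ _
  have hy (t y : ℝ) : F s (t * √y) * gegenbauer l p s * gegenbauer m q t *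
      ((y : ℂ) ^ (m + (q : ℂ) / 2) * ((1 - y : ℝ) : ℂ) ^ b) * gegenbauerWeight l s *
        gegenbauerWeight m t = gegenbauer l p s * gegenbauerWeight l s * (F s (t * √y) *
          gegenbauer m q t * ((y : ℂ) ^ (m + (q : ℂ) / 2) * ((1 - y : ℝ) : ℂ) ^ b) *
          gegenbauerWeight m t) := by ring
  simp only [Function.comp_apply, Function.uncurry_apply_pair] at hs
  simp only [hx, hy, weightedIntegral_const_mul, intervalIntegral.integral_const_mul, hs]
  rw [gegenbauer_eq_rodriguesCoeff_mul hl]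
  ring

theorem neg_one_zpow_sub_div_two (hpq : p + q = 2 * N) :
    (-1 : ℂ) ^ (((q : ℤ) - (p : ℤ)) / 2) = (-1) ^ (q + N) := by
  rw [show ((q : ℤ) - p) / 2 = ((q + N : ℕ) : ℤ) - 2 * N by omega, zpow_sub₀ (by norm_num),
    zpow_natCast, zpow_mul, zpow_ofNat, neg_one_sq, one_zpow, div_one]

theorem four_pow_eq_two_pow_mul_two_pow (hpq : p + q = 2 * N) :
    (4 : ℂ) ^ N = 2 ^ p * 2 ^ q := by
  rw [← pow_add, hpq, pow_mul]
  norm_num only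

theorem rodriguesCoeff_mul_rodriguesRieszGamma (hpq : p + q = 2 * N)
    (hl : -(1 / 2 : ℝ) < l.re) (hm : -(1 / 2 : ℝ) < m.re) (hb : -1 < b.re) :
    rodriguesCoeff p l * (rodriguesCoeff q m *
        (Complex.Gamma (m + q + 1 / 2) * Complex.Gamma (b + 1) /
          Complex.Gamma (m + b + 1 + q + 1 / 2))) * rodriguesRieszGamma p q N l (m + b + 1) ν =
      (√Real.pi : ℂ) * (-1) ^ (((q : ℤ) - (p : ℤ)) / 2) / (p.factorial * q.factorial) *
          ((ascPochhammer ℂ p).eval (2 * l) * (ascPochhammer ℂ q).eval (2 * m) *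
            (ascPochhammer ℂ ((p + q) / 2)).eval (-ν) * Complex.Gamma (l + 1 / 2) *
            Complex.Gamma (m + 1 / 2) * Complex.Gamma (ν + 1 / 2) *
            Complex.Gamma (l + m + 2 * ν + b + 2) * Complex.Gamma (b + 1)) /
        (Complex.Gamma (l + m + ν + b + ((p : ℂ) + (q : ℂ)) / 2 + 2) *
          Complex.Gamma (l + ν + ((p : ℂ) - (q : ℂ)) / 2 + 1) *
          Complex.Gamma (m + ν + b - ((p : ℂ) - (q : ℂ)) / 2 + 2)) := by
  have hpq' : (p : ℂ) + q = 2 * N := by exact_mod_cast hpq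
  have hmb := neg_half_lt_add_add_one_re hm hb
  have hΓmb := Complex.Gamma_ne_zero_of_re_pos
    (add_one_half_re_pos (neg_half_lt_add_natCast_re hmb q))
  have hcl := rodriguesCoeff_mul_Gamma hl p
  have hcm := rodriguesCoeff_mul_Gamma hm q
  rw [rodriguesRieszGamma, neg_one_zpow_sub_div_two hpq, four_pow_eq_two_pow_mul_two_pow hpq,
    show (p + q) / 2 = N by omega,
    show l + (m + b + 1) + 2 * ν + 1 = l + m + 2 * ν + b + 2 by ring,
    show l + (m + b + 1) + ν + N + 1 = l + m + ν + b + ((p : ℂ) + q) / 2 + 2 by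
      linear_combination -hpq' / 2,
    show l + p + ν - N + 1 = l + ν + ((p : ℂ) - q) / 2 + 1 by linear_combination hpq' / 2,
    show m + b + 1 + q + ν - N + 1 = m + ν + b - ((p : ℂ) - q) / 2 + 2 by
      linear_combination hpq' / 2, ← mul_inv, ← mul_inv, ← div_eq_mul_inv]
  generalize Complex.Gamma (l + p + 1 / 2) = Γ₁ at *
  generalize Complex.Gamma (m + q + 1 / 2) = Γ₂ at *
  generalize Complex.Gamma (m + b + 1 + q + 1 / 2) = Γ₃ at *
  generalize Complex.Gamma (l + m + ν + b + ((p : ℂ) + q) / 2 + 2) *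
    Complex.Gamma (l + ν + ((p : ℂ) - q) / 2 + 1) *
    Complex.Gamma (m + ν + b - ((p : ℂ) - q) / 2 + 2) = D
  calc
    _ = (√Real.pi : ℂ) * (-1) ^ (q + N) * (rodriguesCoeff p l * (2 ^ p * Γ₁)) *
          (rodriguesCoeff q m * (2 ^ q * Γ₂)) * (ascPochhammer ℂ N).eval (-ν) *
          Complex.Gamma (ν + 1 / 2) * Complex.Gamma (l + m + 2 * ν + b + 2) *
          Complex.Gamma (b + 1) / D * (Γ₃ / Γ₃) := by ring
    _ = _ := by
      rw [hcl, hcm, div_self hΓmb]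
      ring

end TripleIntegral

theorem stmt2 (lam mu ν b : ℂ) (ℓ m : ℕ) (hpar : Even (ℓ + m))
    (hlam : -(1 / 2 : ℝ) < lam.re) (hmu : -(1 / 2 : ℝ) < mu.re) (hν : 0 < ν.re)
    (hb : -1 < b.re) :
    (2 : ℤ) ∣ ((m : ℤ) - (ℓ : ℤ)) ∧
    (∫ s in (-1 : ℝ)..1, ∫ t in (-1 : ℝ)..1, ∫ y in (0 : ℝ)..1,
        ((|s - t * Real.sqrt y| : ℝ) : ℂ) ^ (2 * ν) *
          gegenbauer lam ℓ (s : ℂ) * gegenbauer mu m (t : ℂ) *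
          ((y : ℂ) ^ (mu + (m : ℂ) / 2) * ((1 - y : ℝ) : ℂ) ^ b) *
          ((1 - s ^ 2 : ℝ) : ℂ) ^ (lam - 1 / 2 : ℂ) *
          ((1 - t ^ 2 : ℝ) : ℂ) ^ (mu - 1 / 2 : ℂ)) =
      ((Real.sqrt Real.pi : ℂ) * (-1 : ℂ) ^ (((m : ℤ) - (ℓ : ℤ)) / 2) /
          ((Nat.factorial ℓ : ℂ) * (Nat.factorial m : ℂ))) *
        ((ascPochhammer ℂ ℓ).eval (2 * lam) * (ascPochhammer ℂ m).eval (2 * mu) *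
            (ascPochhammer ℂ ((ℓ + m) / 2)).eval (-ν) *
            Complex.Gamma (lam + 1 / 2) * Complex.Gamma (mu + 1 / 2) *
            Complex.Gamma (ν + 1 / 2) * Complex.Gamma (lam + mu + 2 * ν + b + 2) *
            Complex.Gamma (b + 1)) /
          (Complex.Gamma (lam + mu + ν + b + ((ℓ : ℂ) + (m : ℂ)) / 2 + 2) *
            Complex.Gamma (lam + ν + ((ℓ : ℂ) - (m : ℂ)) / 2 + 1) *
            Complex.Gamma (mu + ν + b - ((ℓ : ℂ) - (m : ℂ)) / 2 + 2)) := by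
  obtain ⟨N, hN⟩ := hpar
  have hpq : ℓ + m = 2 * N := by omega
  refine ⟨by omega, ?_⟩
  have hmub := neg_half_lt_add_add_one_re hmu hb
  have hk := continuous_signedAbsCpow 0 (two_mul_re_pos hν)
  have hkernel : Continuous (Function.uncurry fun s x : ℝ => signedAbsCpow 0 (2 * ν) (s - x)) := by
    fun_prop
  have htriple := integral_integral_integral_comp_mul_sqrt_mul_gegenbauer (p := ℓ) (q := m)
    hlam hmu hb hkernel
  rw [weightedIntegral₂_signedAbsCpow_mul_rodriguesPoly hpq hlam hmub hν,
    rodriguesCoeff_mul_rodriguesRieszGamma hpq hlam hmu hb] at htriple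
  simpa only [signedAbsCpow_zero_left, gegenbauerWeight] using htriple
end

section
/- Suppose a, b, c ∈ ℂ satisfy Re a > 0, Re b > 0 and Re c > 1/2. Then for every x with −1 ≤ x ≤ 1, ∫_{−1}^1 ∫_{−1}^1 (s − xt)_+^{2c−1} (1 − s²)^{a−1} (1 − t²)^{b−1} ds dt = (√π · Γ(a) Γ(b) Γ(c) / (2 Γ(a+c) Γ(b+1/2))) · ₂F₁(−c + 1/2, −a − c + 1; b + 1/2; x²). -/
open MeasureTheory intervalIntegral

/-- `y_+^α := y^α` for `y > 0`, `0` otherwise. -/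
noncomputable def posPow (y : ℝ) (α : ℂ) : ℂ := if 0 < y then (y : ℂ) ^ α else 0

/-- The Gauss hypergeometric function `₂F₁(a,b;c;z)` as a series. -/
noncomputable def hyp2F1 (a b c z : ℂ) : ℂ :=
  ∑' n : ℕ, ((ascPochhammer ℂ n).eval a * (ascPochhammer ℂ n).eval b /
    ((ascPochhammer ℂ n).eval c * (Nat.factorial n : ℂ))) * z ^ n

/-!
Only the part of the inner integral `G(y) = ∫ (s - y)_+ ^ (2c - 1) (1 - s²) ^ (a - 1) ds` that is
even in `y = xt` survives the integration over `t`. The Möbius map `s = (y + u) / (1 + yu)` turns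
`G(y)` into `(1 - y²) ^ (a + 2c - 1)` times the integral over `0 < u < 1` of
`u ^ (2c - 1) (1 - u²) ^ (a - 1) (1 + yu) ^ (-(2a + 2c - 1))`. The even part of the last factor is
a `₂F₁` in `(yu)²` with lower parameter `1/2`, and integrating it termwise against the beta density
replaces an upper parameter. Euler's transformation, a consequence of the hypergeometric
differential equation, then absorbs the power of `1 - y²`. A second termwise beta integration, now
over `t`, raises the lower parameter from `1/2` to `b + 1/2`.
-/

local notation "gaussCoeff" => ordinaryHypergeometricCoefficient

section GaussCoefficients

open PowerSeries

theorem multichoose_succ {R : Type*} [CommRing R] [BinomialRing R] (r : R) (n : ℕ) :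
    (n + 1) * Ring.multichoose r (n + 1) = (r + n) * Ring.multichoose r n := by
  have := BinomialRing.toIsAddTorsionFree (R := R)
  have h₀ := Ring.factorial_nsmul_multichoose_eq_ascPochhammer r n
  have h₁ := Ring.factorial_nsmul_multichoose_eq_ascPochhammer r (n + 1)
  rw [Polynomial.ascPochhammer_smeval_eq_eval, nsmul_eq_mul] at h₀ h₁
  rw [ascPochhammer_succ_eval, ← h₀, Nat.factorial_succ] at h₁
  apply nsmul_right_injective n.factorial_ne_zero
  push_cast [nsmul_eq_mul] at h₁ ⊢
  linear_combination h₁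

variable {K : Type*} [Field K]

theorem ascPochhammer_eval_ne_zero {c : K} (hc : ∀ k : ℕ, c ≠ -k) (n : ℕ) :
    (ascPochhammer K n).eval c ≠ 0 := by
  rw [Ne, ascPochhammer_eval_eq_zero_iff]
  rintro ⟨k, -, hk⟩
  exact hc k (by rw [hk, neg_neg])

theorem add_natCast_ne_zero {c : K} (hc : ∀ k : ℕ, c ≠ -k) (n : ℕ) : c + n ≠ 0 :=
  fun h ↦ hc n (eq_neg_of_add_eq_zero_left h)

theorem gaussCoeff_zero (a b c : K) : gaussCoeff a b c 0 = 1 := by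
  simp [ordinaryHypergeometricCoefficient]

/-- The left-hand side `X(1 - X)f'' + (c - (a + b + 1)X)f' - ab f` of Gauss's hypergeometric
differential equation, on formal power series. -/
noncomputable def hypergeometricOperator (a b c : K) (f : PowerSeries K) : PowerSeries K :=
  X * (1 - X) * derivative K (derivative K f) +
    (C c - C (a + b + 1) * X) * derivative K f - C (a * b) * f

theorem coeff_hypergeometricOperator (a b c : K) (f : PowerSeries K) (n : ℕ) :
    coeff n (hypergeometricOperator a b c f) =
      (n + 1) * (c + n) * coeff (n + 1) f - (a + n) * (b + n) * coeff n f := by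
  have expand : hypergeometricOperator a b c f =
      X * derivative K (derivative K f) - X * (X * derivative K (derivative K f)) +
        C c * derivative K f - C (a + b + 1) * (X * derivative K f) - C (a * b) * f := by
    rw [hypergeometricOperator]; ring
  rw [expand]
  rcases n with _ | _ | n <;>
  · simp only [map_sub, (coeff _).map_add, coeff_succ_X_mul, coeff_C_mul, coeff_derivative,
      coeff_zero_X_mul]
    push_cast
    ring

theorem hypergeometricOperator_mul_eq_zero {a b c : K} {P F : PowerSeries K}
    (hP : (1 - X) * derivative K P = C (c - a - b) * P) (hF : hypergeometricOperator a b c F = 0) :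
    hypergeometricOperator (c - a) (c - b) c (P * F) = 0 := by
  have hP' : (1 - X) * derivative K (derivative K P) = (C (c - a - b) + 1) * derivative K P := by
    have := congrArg (derivative K) hP
    simp only [Derivation.leibniz, derivative_X, derivative_C, Derivation.map_one_eq_zero,
      map_sub, smul_eq_mul] at this ⊢
    linear_combination this
  have one_sub_X_ne_zero : (1 - X : PowerSeries K) ≠ 0 := fun h ↦ by
    simpa using congrArg (coeff 0) h
  -- After multiplication by `1 - X`, `hP` and `hP'` eliminate the derivatives of `P`.
  refine (mul_eq_zero.mp ?_).resolve_left one_sub_X_ne_zero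
  simp only [hypergeometricOperator, Derivation.leibniz, map_add, smul_eq_mul, map_mul, map_sub,
    map_one] at hF hP hP' ⊢
  linear_combination (1 - X) * P * hF + X * (1 - X) * F * hP' +
    (X * (C c - C a - C b + 1) * F + 2 * X * (1 - X) * derivative K F +
      (C c - (2 * C c - C a - C b + 1) * X) * F) * hP

variable [CharZero K]

theorem gaussCoeff_succ (a b : K) {c : K} (hc : ∀ k : ℕ, c ≠ -k) (n : ℕ) :
    (n + 1) * (c + n) * gaussCoeff a b c (n + 1) = (a + n) * (b + n) * gaussCoeff a b c n := by
  have hn : (n + 1 : K) ≠ 0 := n.cast_add_one_ne_zero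
  have hfac : (n.factorial : K) ≠ 0 := mod_cast n.factorial_ne_zero
  have hcn := add_natCast_ne_zero hc n
  have hpoch := ascPochhammer_eval_ne_zero hc n
  simp only [ordinaryHypergeometricCoefficient, ascPochhammer_succ_eval, Nat.factorial_succ]
  push_cast
  field_simp

theorem hypergeometricOperator_eq_zero_iff (a b : K) {c : K} (hc : ∀ k : ℕ, c ≠ -k)
    (f : PowerSeries K) :
    hypergeometricOperator a b c f = 0 ↔ ∀ n, coeff n f = coeff 0 f * gaussCoeff a b c n := by
  have hlead (n : ℕ) : (n + 1) * (c + n) ≠ 0 :=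
    mul_ne_zero n.cast_add_one_ne_zero (add_natCast_ne_zero hc n)
  simp only [PowerSeries.ext_iff, coeff_hypergeometricOperator, map_zero, sub_eq_zero]
  refine ⟨fun h n ↦ ?_, fun h n ↦ ?_⟩
  · induction n with
    | zero => rw [gaussCoeff_zero, mul_one]
    | succ n ih =>
      apply mul_left_cancel₀ (hlead n)
      rw [h n, ih]
      linear_combination -coeff 0 f * gaussCoeff_succ a b hc n
  · rw [h (n + 1), h n]
    linear_combination coeff 0 f * gaussCoeff_succ a b hc n

theorem one_sub_X_mul_derivative_mk_multichoose (l : K) :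
    (1 - X) * derivative K (mk (Ring.multichoose l)) = C l * mk (Ring.multichoose l) := by
  ext n
  rw [sub_mul, one_mul]
  rcases n with _ | n
  · have := multichoose_succ l 0
    simp only [map_sub, coeff_zero_X_mul, coeff_C_mul, coeff_derivative, coeff_mk]
    push_cast at this ⊢
    linear_combination this
  · have := multichoose_succ l (n + 1)
    simp only [map_sub, coeff_succ_X_mul, coeff_C_mul, coeff_derivative, coeff_mk]
    push_cast at this ⊢
    linear_combination this

theorem sum_antidiagonal_multichoose_mul_gaussCoeff (a b : K) {c : K} (hc : ∀ k : ℕ, c ≠ -k)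
    (n : ℕ) :
    ∑ ij ∈ Finset.HasAntidiagonal.antidiagonal n,
        Ring.multichoose (c - a - b) ij.1 * gaussCoeff a b c ij.2 =
      gaussCoeff (c - a) (c - b) c n := by
  set P : PowerSeries K := mk (Ring.multichoose (c - a - b))
  set F : PowerSeries K := mk (gaussCoeff a b c)
  have hF : hypergeometricOperator a b c F = 0 := by
    simp [hypergeometricOperator_eq_zero_iff a b hc, F, gaussCoeff_zero]
  have hPF := (hypergeometricOperator_eq_zero_iff _ _ hc _).mp
    (hypergeometricOperator_mul_eq_zero (one_sub_X_mul_derivative_mk_multichoose _) hF) n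
  simpa [P, F, coeff_mul, gaussCoeff_zero] using hPF

theorem multichoose_two_mul (p : K) (n : ℕ) :
    Ring.multichoose p (2 * n) = gaussCoeff (p / 2) ((p + 1) / 2) (1 / 2) n := by
  have two_mul_add_one_ne_zero (k : ℕ) : (2 * k + 1 : K) ≠ 0 := mod_cast (2 * k).succ_ne_zero
  have half_ne_neg (k : ℕ) : (1 / 2 : K) ≠ -k := fun h ↦
    two_mul_add_one_ne_zero k (by linear_combination 2 * h)
  induction n with
  | zero => simp [gaussCoeff_zero]
  | succ n ih =>
    have hlead : (n + 1 : K) * (1 / 2 + n) ≠ 0 :=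
      mul_ne_zero n.cast_add_one_ne_zero (add_natCast_ne_zero half_ne_neg n)
    have h₁ := multichoose_succ p (2 * n)
    have h₂ := multichoose_succ p (2 * n + 1)
    push_cast at h₁ h₂
    apply mul_left_cancel₀ hlead
    rw [gaussCoeff_succ _ _ half_ne_neg, ← ih, show 2 * (n + 1) = 2 * n + 1 + 1 by ring]
    linear_combination (p + 2 * n + 1) / 4 * h₁ + (2 * n + 1) / 4 * h₂

end GaussCoefficients

section Convergence

open Filter Asymptotics

theorem ne_neg_natCast_of_re_pos {c : ℂ} (hc : 0 < c.re) (k : ℕ) : c ≠ -k := by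
  rintro rfl
  simp only [Complex.neg_re, Complex.natCast_re, Left.neg_pos_iff] at hc
  exact hc.not_ge k.cast_nonneg

theorem ascPochhammer_eval_eq_prod {R : Type*} [CommSemiring R] (n : ℕ) (s : R) :
    (ascPochhammer R n).eval s = ∏ j ∈ Finset.range n, (s + j) := by
  induction n with
  | zero => simp
  | succ n ih => rw [ascPochhammer_succ_eval, Finset.prod_range_succ, ih]

theorem GammaSeq_mul_natCast_cpow_neg (s : ℂ) {n : ℕ} (hn : 0 < n) :
    Complex.GammaSeq s n * (n : ℂ) ^ (-s) = n.factorial / (ascPochhammer ℂ (n + 1)).eval s := by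
  have hpow : (n : ℂ) ^ s ≠ 0 := by simp [Complex.cpow_eq_zero_iff, hn.ne']
  rw [Complex.GammaSeq, ascPochhammer_eval_eq_prod, Complex.cpow_neg]
  field_simp

theorem isBigO_natCast_cpow (s : ℂ) :
    (fun n : ℕ ↦ (n : ℂ) ^ s) =O[atTop] fun n : ℕ ↦ (n : ℝ) ^ s.re := by
  refine IsBigO.of_norm_eventuallyLE ?_
  filter_upwards [eventually_gt_atTop 0] with n hn
  rw [Complex.norm_natCast_cpow_of_pos hn]

theorem isBigO_factorial_div_ascPochhammer (s : ℂ) :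
    (fun n : ℕ ↦ n.factorial / (ascPochhammer ℂ (n + 1)).eval s) =O[atTop]
      fun n : ℕ ↦ (n : ℝ) ^ (-s.re) := by
  have h := ((Complex.GammaSeq_tendsto_Gamma s).isBigO_one ℝ).mul (isBigO_natCast_cpow (-s))
  simp only [one_mul, Complex.neg_re] at h
  refine h.congr' ?_ .rfl
  filter_upwards [eventually_gt_atTop 0] with n hn using GammaSeq_mul_natCast_cpow_neg s hn

theorem isBigO_ascPochhammer_div_factorial (s : ℂ) :
    (fun n : ℕ ↦ (ascPochhammer ℂ (n + 1)).eval s / n.factorial) =O[atTop]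
      fun n : ℕ ↦ (n : ℝ) ^ s.re := by
  by_cases hs : Complex.Gamma s = 0
  · obtain ⟨m, rfl⟩ := (Complex.Gamma_eq_zero_iff s).mp hs
    refine EventuallyEq.trans_isBigO ?_ (isBigO_zero _ _)
    filter_upwards [eventually_ge_atTop m] with n hn
    rw [(ascPochhammer_eval_eq_zero_iff _ _).mpr ⟨m, by lia, by simp⟩, zero_div]
  · have h := (((Complex.GammaSeq_tendsto_Gamma s).inv₀ hs).isBigO_one ℝ).mul
      (isBigO_natCast_cpow s)
    simp only [one_mul] at h
    refine h.congr' ?_ .rfl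
    filter_upwards [eventually_gt_atTop 0] with n hn
    rw [← inv_div, ← GammaSeq_mul_natCast_cpow_neg s hn, mul_inv, Complex.cpow_neg, inv_inv]

theorem isBigO_gaussCoeff_succ (a b c : ℂ) :
    (fun n ↦ gaussCoeff a b c (n + 1)) =O[atTop]
      fun n : ℕ ↦ (n : ℝ) ^ (a.re + b.re - c.re - 1) := by
  have h := (((isBigO_ascPochhammer_div_factorial a).mul
    (isBigO_ascPochhammer_div_factorial b)).mul (isBigO_factorial_div_ascPochhammer c)).mul
    (isBigO_factorial_div_ascPochhammer 1)
  refine h.congr' (.of_forall fun n ↦ ?_) ?_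
  · have hfac : (n.factorial : ℂ) ≠ 0 := mod_cast n.factorial_ne_zero
    simp only [ordinaryHypergeometricCoefficient, ascPochhammer_eval_one]
    field_simp
  · filter_upwards [eventually_gt_atTop 0] with n hn
    have hn' : (0 : ℝ) < n := mod_cast hn
    rw [← Real.rpow_add hn', ← Real.rpow_add hn', ← Real.rpow_add hn', Complex.one_re]
    ring_nf

theorem summable_gaussCoeff_mul_pow_of_norm_le_one {a b c z : ℂ} (h : a.re + b.re < c.re)
    (hz : ‖z‖ ≤ 1) : Summable fun n ↦ gaussCoeff a b c n * z ^ n := by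
  have hcoeff : Summable (gaussCoeff a b c) := by
    rw [← summable_nat_add_iff 1]
    exact summable_of_isBigO_nat (Real.summable_nat_rpow.mpr (by linarith))
      (isBigO_gaussCoeff_succ a b c)
  refine .of_norm_bounded hcoeff.norm fun n ↦ ?_
  rw [norm_mul, norm_pow]
  exact mul_le_of_le_one_right (norm_nonneg _) (pow_le_one₀ (norm_nonneg _) hz)

theorem summable_gaussCoeff_mul_pow_of_norm_lt_one (a b c : ℂ) {z : ℂ} (hz : ‖z‖ < 1) :
    Summable fun n ↦ gaussCoeff a b c n * z ^ n := by
  obtain ⟨k, hk⟩ := exists_nat_ge (a.re + b.re - c.re - 1)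
  have hpoly : (fun n ↦ gaussCoeff a b c (n + 1)) =O[atTop] fun n : ℕ ↦ (n : ℝ) ^ k := by
    refine (isBigO_gaussCoeff_succ a b c).trans (.of_norm_eventuallyLE ?_)
    filter_upwards [eventually_ge_atTop 1] with n hn
    have hn' : (1 : ℝ) ≤ n := mod_cast hn
    rw [Real.norm_of_nonneg (by positivity), ← Real.rpow_natCast]
    exact Real.rpow_le_rpow_of_exponent_le hn' hk
  have hgeom := summable_pow_mul_geometric_of_norm_lt_one (R := ℝ) k (r := ‖z‖) (by simpa using hz)
  have hpow : (fun n : ℕ ↦ z ^ (n + 1)) =O[atTop] fun n : ℕ ↦ ‖z‖ ^ n :=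
    isBigO_of_le _ fun n ↦ by
      rw [norm_pow, norm_pow, norm_norm]
      exact pow_le_pow_of_le_one (norm_nonneg _) hz.le n.le_succ
  rw [← summable_nat_add_iff 1]
  exact summable_of_isBigO_nat hgeom (hpoly.mul hpow)

theorem hyp2F1_eq_tsum (a b c z : ℂ) : hyp2F1 a b c z = ∑' n, gaussCoeff a b c n * z ^ n := by
  refine tsum_congr fun n ↦ ?_
  rw [ordinaryHypergeometricCoefficient]
  ring

theorem hyp2F1_swap (a b c z : ℂ) : hyp2F1 a b c z = hyp2F1 b a c z := by
  simp only [hyp2F1, mul_comm]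

theorem hasSum_multichoose_mul_pow (l : ℂ) {z : ℂ} (hz : ‖z‖ < 1) :
    HasSum (fun n ↦ Ring.multichoose l n * z ^ n) ((1 - z) ^ (-l)) := by
  have h := (Complex.one_div_one_sub_cpow_hasFPowerSeriesOnBall_zero l).hasSum
    (y := z) (by simpa [← ENNReal.ofReal_one, Metric.eball_ofReal] using hz)
  simpa only [FormalMultilinearSeries.ofScalars_apply_eq, ← Ring.multichoose_eq, zero_add,
    smul_eq_mul, one_div, ← Complex.cpow_neg] using h

theorem one_sub_cpow_mul_hyp2F1 (a b : ℂ) {c z : ℂ} (hc : ∀ k : ℕ, c ≠ -k) (hz : ‖z‖ < 1) :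
    (1 - z) ^ (a + b - c) * hyp2F1 a b c z = hyp2F1 (c - a) (c - b) c z := by
  have hbinom := hasSum_multichoose_mul_pow (c - a - b) hz
  have hgauss := summable_gaussCoeff_mul_pow_of_norm_lt_one a b c hz
  rw [show a + b - c = -(c - a - b) by ring, ← hbinom.tsum_eq, hyp2F1_eq_tsum, hyp2F1_eq_tsum,
    tsum_mul_tsum_eq_tsum_sum_antidiagonal_of_summable_norm hbinom.summable.norm hgauss.norm]
  refine tsum_congr fun n ↦ ?_
  rw [← sum_antidiagonal_multichoose_mul_gaussCoeff a b hc, Finset.sum_mul]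
  refine Finset.sum_congr rfl fun ij hij ↦ ?_
  rw [← Finset.HasAntidiagonal.mem_antidiagonal.mp hij, pow_add]
  ring

theorem one_sub_cpow_neg_add_one_add_cpow_neg (p : ℂ) {z : ℂ} (hz : ‖z‖ < 1) :
    (1 - z) ^ (-p) + (1 + z) ^ (-p) = 2 * hyp2F1 (p / 2) ((p + 1) / 2) (1 / 2) (z ^ 2) := by
  have hsum := (hasSum_multichoose_mul_pow p hz).add
    (hasSum_multichoose_mul_pow p (z := -z) (by rwa [norm_neg]))
  have hodd (n : ℕ) (hn : n ∉ Set.range (2 * ·)) :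
      Ring.multichoose p n * z ^ n + Ring.multichoose p n * (-z) ^ n = 0 := by
    have : Odd n := Nat.not_even_iff_odd.mp fun ⟨k, hk⟩ ↦ hn ⟨k, by simp only; lia⟩
    rw [this.neg_pow]
    ring
  rw [← (mul_right_injective₀ two_ne_zero).hasSum_iff hodd, sub_neg_eq_add] at hsum
  rw [← hsum.tsum_eq, hyp2F1_eq_tsum, ← tsum_mul_left]
  refine tsum_congr fun n ↦ ?_
  simp only [Function.comp_apply, (even_two_mul n).neg_pow, multichoose_two_mul, pow_mul]
  ring

end Convergence

section BetaWeight

theorem ofReal_cpow_eq_exp_log_mul {r : ℝ} (hr : 0 < r) (s : ℂ) :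
    (r : ℂ) ^ s = Complex.exp (Real.log r * s) := by
  rw [Complex.cpow_def_of_ne_zero (mod_cast hr.ne'), Complex.ofReal_log hr.le]

theorem ofReal_eq_exp_log {r : ℝ} (hr : 0 < r) : (r : ℂ) = Complex.exp (Real.log r) := by
  rw [← Complex.ofReal_exp, Real.exp_log hr]

/-- The weight `u ^ (2c - 1) (1 - u²) ^ (a - 1)` on `(0, 1)`: up to the factor `1 / 2`, the density
of the beta integral `B(c, a)` in the variable `u²`. -/
noncomputable def betaWeight (c a : ℂ) (u : ℝ) : ℂ :=
  (u : ℂ) ^ (2 * c - 1) * ((1 - u ^ 2 : ℝ) : ℂ) ^ (a - 1)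

theorem image_sq_Ioo_zero_one : (fun u : ℝ ↦ u ^ 2) '' Set.Ioo 0 1 = Set.Ioo 0 1 := by
  ext v
  constructor
  · rintro ⟨u, ⟨hu₀, hu₁⟩, rfl⟩
    exact ⟨pow_pos hu₀ 2, pow_lt_one₀ hu₀.le hu₁ two_ne_zero⟩
  · rintro ⟨hv₀, hv₁⟩
    exact ⟨√v, ⟨Real.sqrt_pos.mpr hv₀, (Real.sqrt_lt' one_pos).mpr (by simpa using hv₁)⟩,
      Real.sq_sqrt hv₀.le⟩

theorem hasDerivWithinAt_sq (s : Set ℝ) (u : ℝ) :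
    HasDerivWithinAt (fun u : ℝ ↦ u ^ 2) (2 * u) s u := by
  simpa using (hasDerivAt_pow 2 u).hasDerivWithinAt

theorem injOn_sq_Ioo_zero_one : Set.InjOn (fun u : ℝ ↦ u ^ 2) (Set.Ioo 0 1) :=
  fun _ hu _ hv h ↦ (pow_left_inj₀ hu.1.le hv.1.le two_ne_zero).mp h

theorem abs_deriv_smul_beta_density (c a : ℂ) {u : ℝ} (hu : u ∈ Set.Ioo (0 : ℝ) 1) :
    |2 * u| • (((u ^ 2 : ℝ) : ℂ) ^ (c - 1) * (1 - ((u ^ 2 : ℝ) : ℂ)) ^ (a - 1)) =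
      2 * betaWeight c a u := by
  have hu₀ := hu.1
  have hpow : (u : ℂ) * ((u ^ 2 : ℝ) : ℂ) ^ (c - 1) = (u : ℂ) ^ (2 * c - 1) := by
    rw [ofReal_cpow_eq_exp_log_mul (by positivity), ofReal_cpow_eq_exp_log_mul hu₀, Real.log_pow]
    nth_rw 1 [ofReal_eq_exp_log hu₀]
    rw [← Complex.exp_add]
    congr 1
    push_cast
    ring
  rw [abs_of_pos (by positivity), Complex.real_smul, betaWeight, ← hpow]
  push_cast
  ring

theorem integrableOn_betaWeight {c a : ℂ} (hc : 0 < c.re) (ha : 0 < a.re) :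
    IntegrableOn (betaWeight c a) (Set.Ioo 0 1) := by
  have h := Complex.betaIntegral_convergent hc ha
  rw [intervalIntegrable_iff_integrableOn_Ioo_of_le zero_le_one, ← image_sq_Ioo_zero_one,
    integrableOn_image_iff_integrableOn_abs_deriv_smul measurableSet_Ioo
      (fun u _ ↦ hasDerivWithinAt_sq _ u) injOn_sq_Ioo_zero_one,
    integrableOn_congr_fun (fun u hu ↦ abs_deriv_smul_beta_density c a hu) measurableSet_Ioo] at h
  exact (integrable_const_mul_iff (isUnit_iff_ne_zero.mpr two_ne_zero) _).mp h

theorem integral_betaWeight (c a : ℂ) :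
    ∫ u in Set.Ioo (0 : ℝ) 1, betaWeight c a u = Complex.betaIntegral c a / 2 := by
  rw [Complex.betaIntegral, intervalIntegral.integral_of_le zero_le_one,
    integral_Ioc_eq_integral_Ioo, eq_div_iff two_ne_zero, mul_comm,
    ← MeasureTheory.integral_const_mul]
  conv_rhs => rw [← image_sq_Ioo_zero_one]
  rw [integral_image_eq_integral_abs_deriv_smul measurableSet_Ioo
    (fun u _ ↦ hasDerivWithinAt_sq _ u) injOn_sq_Ioo_zero_one]
  exact setIntegral_congr_fun measurableSet_Ioo fun u hu ↦
    (abs_deriv_smul_beta_density c a hu).symm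

theorem integral_sq_pow_mul_betaWeight (c a : ℂ) (n : ℕ) :
    ∫ u in Set.Ioo (0 : ℝ) 1, ((u : ℂ) ^ 2) ^ n * betaWeight c a u =
      Complex.betaIntegral (c + n) a / 2 := by
  rw [← integral_betaWeight]
  refine setIntegral_congr_fun measurableSet_Ioo fun u hu ↦ ?_
  have hu₀ : (u : ℂ) ≠ 0 := mod_cast hu.1.ne'
  simp only [betaWeight]
  rw [← mul_assoc, ← pow_mul, show 2 * (c + n) - 1 = ((2 * n : ℕ) : ℂ) + (2 * c - 1) by
    push_cast; ring, Complex.cpow_add _ _ hu₀, Complex.cpow_natCast]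

theorem betaIntegral_add_natCast {c a : ℂ} (hc : 0 < c.re) (ha : 0 < a.re) (n : ℕ) :
    Complex.betaIntegral (c + n) a =
      Complex.betaIntegral c a *
        ((ascPochhammer ℂ n).eval c / (ascPochhammer ℂ n).eval (c + a)) := by
  have hca : 0 < (c + a).re := add_pos hc ha
  have hcn : 0 < (c + n).re := add_pos_of_pos_of_nonneg hc (by simp)
  rw [← Complex.Gamma_add_nat_div_Gamma_eq _ (ne_neg_natCast_of_re_pos hc),
    ← Complex.Gamma_add_nat_div_Gamma_eq _ (ne_neg_natCast_of_re_pos hca),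
    Complex.betaIntegral_eq_Gamma_mul_div _ _ hc ha,
    Complex.betaIntegral_eq_Gamma_mul_div _ _ hcn ha, add_right_comm]
  have := Complex.Gamma_ne_zero_of_re_pos hc
  have := Complex.Gamma_ne_zero_of_re_pos hca
  field_simp

theorem hasSum_integral_pow_mul {X : Type*} [MeasurableSpace X] {μ : Measure X} {𝕜 : Type*}
    [RCLike 𝕜] {f w : X → 𝕜} {k : ℕ → 𝕜} (hk : Summable k)
    (hf : AEStronglyMeasurable f μ) (hf₁ : ∀ᵐ x ∂μ, ‖f x‖ ≤ 1) (hw : Integrable w μ) :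
    HasSum (fun n ↦ k n * ∫ x, f x ^ n * w x ∂μ) (∫ x, (∑' n, k n * f x ^ n) * w x ∂μ) := by
  have hle {x : X} (hx : ‖f x‖ ≤ 1) (n : ℕ) : ‖k n * f x ^ n‖ ≤ ‖k n‖ := by
    rw [norm_mul, norm_pow]
    exact mul_le_of_le_one_right (norm_nonneg _) (pow_le_one₀ (norm_nonneg _) hx)
  have h := hasSum_integral_of_dominated_convergence (μ := μ)
    (F := fun n x ↦ k n * f x ^ n * w x) (f := fun x ↦ (∑' n, k n * f x ^ n) * w x)
    (fun n x ↦ ‖k n‖ * ‖w x‖)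
    (fun n ↦ ((hf.pow n).const_mul _).mul hw.aestronglyMeasurable)
    (fun n ↦ by
      filter_upwards [hf₁] with x hx
      rw [norm_mul]
      exact mul_le_mul_of_nonneg_right (hle hx n) (norm_nonneg _))
    (.of_forall fun x ↦ hk.norm.mul_right _)
    (by simpa only [tsum_mul_right] using hw.norm.const_mul _)
    (by
      filter_upwards [hf₁] with x hx
      exact (Summable.of_norm_bounded hk.norm (hle hx)).hasSum.mul_right _)
  simpa only [mul_assoc, MeasureTheory.integral_const_mul] using h

theorem hasSum_integral_tsum_mul_betaWeight {c a : ℂ} (hc : 0 < c.re) (ha : 0 < a.re) {k : ℕ → ℂ}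
    (hk : Summable k) :
    HasSum (fun n ↦ k n * (Complex.betaIntegral c a *
        ((ascPochhammer ℂ n).eval c / (ascPochhammer ℂ n).eval (c + a)) / 2))
      (∫ u in Set.Ioo (0 : ℝ) 1, (∑' n, k n * ((u : ℂ) ^ 2) ^ n) * betaWeight c a u) := by
  have hle : ∀ᵐ u : ℝ ∂volume.restrict (Set.Ioo 0 1), ‖(u : ℂ) ^ 2‖ ≤ 1 := by
    filter_upwards [ae_restrict_mem measurableSet_Ioo] with u hu
    rw [norm_pow, Complex.norm_real, Real.norm_of_nonneg hu.1.le]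
    exact pow_le_one₀ hu.1.le hu.2.le
  have h := hasSum_integral_pow_mul hk (by fun_prop) hle (integrableOn_betaWeight hc ha)
  simpa only [integral_sq_pow_mul_betaWeight, betaIntegral_add_natCast hc ha] using h

theorem integral_hyp2F1_mul_betaWeight_upper {α γ z c a : ℂ} (hc : 0 < c.re) (ha : 0 < a.re)
    (hz : Summable fun n ↦ gaussCoeff α (c + a) γ n * z ^ n) :
    ∫ u in Set.Ioo (0 : ℝ) 1, hyp2F1 α (c + a) γ (z * u ^ 2) * betaWeight c a u =
      Complex.betaIntegral c a / 2 * hyp2F1 α c γ z := by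
  have hsum := hasSum_integral_tsum_mul_betaWeight hc ha hz
  simp only [hyp2F1_eq_tsum, mul_pow, ← mul_assoc, ← tsum_mul_left] at hsum ⊢
  rw [← hsum.tsum_eq]
  refine tsum_congr fun n ↦ ?_
  have hca : 0 < (c + a).re := add_pos hc ha
  have := ascPochhammer_eval_ne_zero (ne_neg_natCast_of_re_pos hca) n
  field_simp

theorem integral_hyp2F1_mul_betaWeight_lower {α β z c a : ℂ} (hc : 0 < c.re) (ha : 0 < a.re)
    (hz : Summable fun n ↦ gaussCoeff α β c n * z ^ n) :
    ∫ u in Set.Ioo (0 : ℝ) 1, hyp2F1 α β c (z * u ^ 2) * betaWeight c a u =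
      Complex.betaIntegral c a / 2 * hyp2F1 α β (c + a) z := by
  have hsum := hasSum_integral_tsum_mul_betaWeight hc ha hz
  simp only [hyp2F1_eq_tsum, mul_pow, ← mul_assoc, ← tsum_mul_left] at hsum ⊢
  rw [← hsum.tsum_eq]
  refine tsum_congr fun n ↦ ?_
  have := ascPochhammer_eval_ne_zero (ne_neg_natCast_of_re_pos hc) n
  field_simp

end BetaWeight

section TruncatedPowerIntegral

/-- The Möbius map of the interval `(-1, 1)` that sends `0` to `y`. -/
noncomputable def mobius (y u : ℝ) : ℝ := (y + u) / (1 + y * u)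

theorem one_add_mul_pos {y u : ℝ} (hy : |y| < 1) (hu : |u| ≤ 1) : 0 < 1 + y * u := by
  have : |y * u| < 1 := by
    rw [abs_mul]
    exact mul_lt_one_of_nonneg_of_lt_one_left (abs_nonneg y) hy hu
  linarith [neg_lt_of_abs_lt this]

theorem mobius_sub {y u : ℝ} (h : 1 + y * u ≠ 0) :
    mobius y u - y = u * (1 - y ^ 2) / (1 + y * u) := by
  rw [mobius]
  field_simp
  ring

theorem one_sub_mobius_sq {y u : ℝ} (h : 1 + y * u ≠ 0) :
    1 - mobius y u ^ 2 = (1 - y ^ 2) * (1 - u ^ 2) / (1 + y * u) ^ 2 := by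
  rw [mobius]
  field_simp
  ring

theorem mobius_neg_mobius {y u : ℝ} (hy : |y| < 1) (hu : |u| < 1) :
    mobius (-y) (mobius y u) = u := by
  have h₁ : 1 + y * u ≠ 0 := (one_add_mul_pos hy hu.le).ne'
  have h₂ : 1 - y ^ 2 ≠ 0 := (sub_pos.mpr ((sq_lt_one_iff_abs_lt_one y).mpr hy)).ne'
  have h₃ : 1 + -y * mobius y u = (1 - y ^ 2) / (1 + y * u) := by
    rw [mobius]
    field_simp
    ring
  rw [mobius, h₃, neg_add_eq_sub, mobius_sub h₁,
    div_div_div_cancel_right₀ h₁, mul_div_cancel_right₀ _ h₂]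

theorem abs_mobius_lt_one {y u : ℝ} (hy : |y| < 1) (hu : |u| < 1) : |mobius y u| < 1 := by
  have hy' := (sq_lt_one_iff_abs_lt_one y).mpr hy
  have hu' := (sq_lt_one_iff_abs_lt_one u).mpr hu
  have h := one_add_mul_pos hy hu.le
  rw [← sq_lt_one_iff_abs_lt_one, ← sub_pos, one_sub_mobius_sq h.ne']
  exact div_pos (mul_pos (sub_pos.mpr hy') (sub_pos.mpr hu')) (pow_pos h 2)

theorem lt_mobius_iff {y u : ℝ} (hy : |y| < 1) (hu : |u| < 1) : y < mobius y u ↔ 0 < u := by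
  have hy' : 0 < 1 - y ^ 2 := sub_pos.mpr ((sq_lt_one_iff_abs_lt_one y).mpr hy)
  have h := one_add_mul_pos hy hu.le
  rw [← sub_pos, mobius_sub h.ne', div_pos_iff_of_pos_right h, mul_pos_iff_of_pos_right hy']

theorem image_mobius_Ioo {y : ℝ} (hy : |y| < 1) : mobius y '' Set.Ioo 0 1 = Set.Ioo y 1 := by
  have hy' : |-y| < 1 := by rwa [abs_neg]
  ext s
  constructor
  · rintro ⟨u, ⟨hu₀, hu₁⟩, rfl⟩
    have hu : |u| < 1 := by rwa [abs_of_pos hu₀]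
    exact ⟨(lt_mobius_iff hy hu).mpr hu₀, lt_of_abs_lt (abs_mobius_lt_one hy hu)⟩
  · rintro ⟨hys, hs₁⟩
    have hs : |s| < 1 := abs_lt.mpr ⟨(neg_lt_of_abs_lt hy).trans hys, hs₁⟩
    have hu := abs_mobius_lt_one hy' hs
    have hinv : mobius y (mobius (-y) s) = s := by simpa using mobius_neg_mobius hy' hs
    exact ⟨mobius (-y) s, ⟨(lt_mobius_iff hy hu).mp (by rwa [hinv]), lt_of_abs_lt hu⟩, hinv⟩

theorem injOn_mobius {y : ℝ} (hy : |y| < 1) : Set.InjOn (mobius y) (Set.Ioo (-1) 1) :=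
  Set.LeftInvOn.injOn fun _ hu ↦ mobius_neg_mobius hy (abs_lt.mpr hu)

theorem hasDerivAt_mobius {y u : ℝ} (h : 1 + y * u ≠ 0) :
    HasDerivAt (mobius y) ((1 - y ^ 2) / (1 + y * u) ^ 2) u := by
  have hnum : HasDerivAt (fun u ↦ y + u) 1 u := (hasDerivAt_id u).const_add y
  have hden : HasDerivAt (fun u ↦ 1 + y * u) y u := by
    simpa using ((hasDerivAt_id u).const_mul y).const_add 1
  refine (hnum.div hden h).congr_deriv ?_
  congr 1
  ring

theorem abs_deriv_mobius_smul_eq (a c : ℂ) {y u : ℝ} (hy : |y| < 1) (hu : u ∈ Set.Ioo (0 : ℝ) 1) :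
    |(1 - y ^ 2) / (1 + y * u) ^ 2| • (posPow (mobius y u - y) (2 * c - 1) *
        ((1 - mobius y u ^ 2 : ℝ) : ℂ) ^ (a - 1)) =
      ((1 - y ^ 2 : ℝ) : ℂ) ^ (a + 2 * c - 1) *
        (((1 + y * u : ℝ) : ℂ) ^ (-(2 * a + 2 * c - 1)) * betaWeight c a u) := by
  obtain ⟨hu₀, hu₁⟩ := hu
  have hu : |u| < 1 := by rwa [abs_of_pos hu₀]
  have hE : 0 < 1 - y ^ 2 := sub_pos.mpr ((sq_lt_one_iff_abs_lt_one y).mpr hy)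
  have hU : 0 < 1 - u ^ 2 := sub_pos.mpr ((sq_lt_one_iff_abs_lt_one u).mpr hu)
  have hD : 0 < 1 + y * u := one_add_mul_pos hy hu.le
  rw [mobius_sub hD.ne', one_sub_mobius_sq hD.ne', posPow, if_pos (by positivity),
    abs_of_pos (by positivity), Complex.real_smul, betaWeight,
    ofReal_eq_exp_log (r := (1 - y ^ 2) / (1 + y * u) ^ 2) (by positivity)]
  -- Both sides are now exponentials of the same combination of logarithms.
  repeat rw [ofReal_cpow_eq_exp_log_mul (by positivity)]
  simp only [← Complex.exp_add]
  congr 1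
  rw [Real.log_div (by positivity) (by positivity), Real.log_div (by positivity) (by positivity),
    Real.log_div (by positivity) (by positivity), Real.log_mul hu₀.ne' hE.ne',
    Real.log_mul hE.ne' hU.ne', Real.log_pow]
  push_cast
  ring

/-- The inner integral of the double integral: `(s - y)_+ ^ (2c - 1)` against the weight
`(1 - s²) ^ (a - 1)` on `[-1, 1]`. -/
noncomputable def posPowIntegral (a c : ℂ) (y : ℝ) : ℂ :=
  ∫ s in (-1 : ℝ)..1, posPow (s - y) (2 * c - 1) * ((1 - s ^ 2 : ℝ) : ℂ) ^ (a - 1)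

theorem posPowIntegral_eq_setIntegral (a c : ℂ) {y : ℝ} (hy : -1 ≤ y) :
    posPowIntegral a c y =
      ∫ s in Set.Ioo y 1, posPow (s - y) (2 * c - 1) * ((1 - s ^ 2 : ℝ) : ℂ) ^ (a - 1) := by
  rw [posPowIntegral, intervalIntegral.integral_of_le (by norm_num), ← integral_Ioc_eq_integral_Ioo]
  refine setIntegral_eq_of_subset_of_forall_sdiff_eq_zero measurableSet_Ioc
    (Set.Ioc_subset_Ioc_left hy) fun s hs ↦ ?_
  have : ¬ 0 < s - y := fun h ↦ hs.2 ⟨sub_pos.mp h, hs.1.2⟩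
  rw [posPow, if_neg this, zero_mul]

theorem posPowIntegral_eq_integral_betaWeight (a c : ℂ) {y : ℝ} (hy : |y| < 1) :
    posPowIntegral a c y = ((1 - y ^ 2 : ℝ) : ℂ) ^ (a + 2 * c - 1) *
      ∫ u in Set.Ioo (0 : ℝ) 1,
        ((1 + y * u : ℝ) : ℂ) ^ (-(2 * a + 2 * c - 1)) * betaWeight c a u := by
  have hpos {u : ℝ} (hu : u ∈ Set.Ioo (0 : ℝ) 1) : 1 + y * u ≠ 0 :=
    (one_add_mul_pos hy (by rw [abs_of_pos hu.1]; exact hu.2.le)).ne'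
  rw [posPowIntegral_eq_setIntegral a c (neg_lt_of_abs_lt hy).le, ← image_mobius_Ioo hy,
    integral_image_eq_integral_abs_deriv_smul measurableSet_Ioo
      (fun u hu ↦ (hasDerivAt_mobius (hpos hu)).hasDerivWithinAt)
      ((injOn_mobius hy).mono (Set.Ioo_subset_Ioo_left (by norm_num))),
    ← MeasureTheory.integral_const_mul]
  exact setIntegral_congr_fun measurableSet_Ioo fun u hu ↦ abs_deriv_mobius_smul_eq a c hy hu

theorem integrableOn_one_add_mul_cpow_mul_betaWeight {a c : ℂ} (ha : 0 < a.re) (hc : 0 < c.re)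
    (p : ℂ) {y : ℝ} (hy : |y| < 1) :
    IntegrableOn (fun u ↦ ((1 + y * u : ℝ) : ℂ) ^ p * betaWeight c a u) (Set.Ioo 0 1) := by
  rw [← integrableOn_Icc_iff_integrableOn_Ioo]
  refine IntegrableOn.continuousOn_mul ?_ ?_ isCompact_Icc
  · rintro u ⟨hu₀, hu₁⟩
    have hpos : 0 < 1 + y * u := one_add_mul_pos hy (by rwa [abs_of_nonneg hu₀])
    refine ContinuousAt.continuousWithinAt (.cpow (by fun_prop) continuousAt_const (.inl ?_))
    simpa only [Complex.ofReal_re] using hpos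
  · rw [integrableOn_Icc_iff_integrableOn_Ioo]
    exact integrableOn_betaWeight hc ha

theorem integral_one_add_mul_cpow_add_mul_betaWeight {a c : ℂ} (ha : 0 < a.re) (hc : 0 < c.re)
    {y : ℝ} (hy : |y| < 1) :
    ∫ u in Set.Ioo (0 : ℝ) 1, (((1 + y * u : ℝ) : ℂ) ^ (-(2 * a + 2 * c - 1)) * betaWeight c a u +
        ((1 + -y * u : ℝ) : ℂ) ^ (-(2 * a + 2 * c - 1)) * betaWeight c a u) =
      Complex.betaIntegral c a * hyp2F1 (a + c - 1 / 2) c (1 / 2) ((y : ℂ) ^ 2) := by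
  have hz : ‖(y : ℂ) ^ 2‖ < 1 := by
    simpa using pow_lt_one₀ (abs_nonneg y) hy two_ne_zero
  have heven {u : ℝ} (hu : u ∈ Set.Ioo (0 : ℝ) 1) :
      ((1 + y * u : ℝ) : ℂ) ^ (-(2 * a + 2 * c - 1)) * betaWeight c a u +
        ((1 + -y * u : ℝ) : ℂ) ^ (-(2 * a + 2 * c - 1)) * betaWeight c a u =
      2 * (hyp2F1 (a + c - 1 / 2) (c + a) (1 / 2) ((y : ℂ) ^ 2 * u ^ 2) * betaWeight c a u) := by
    have hyu : ‖((y * u : ℝ) : ℂ)‖ < 1 := by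
      rw [Complex.norm_real, Real.norm_eq_abs, abs_mul, abs_of_pos hu.1]
      exact mul_lt_one_of_nonneg_of_lt_one_left (abs_nonneg y) hy hu.2.le
    have h := one_sub_cpow_neg_add_one_add_cpow_neg (2 * a + 2 * c - 1) hyu
    rw [show (2 * a + 2 * c - 1) / 2 = a + c - 1 / 2 by ring,
      show (2 * a + 2 * c - 1 + 1) / 2 = c + a by ring] at h
    rw [← add_mul, ← mul_assoc, ← mul_pow]
    push_cast at h ⊢
    rw [← h, neg_mul, ← sub_eq_add_neg, add_comm]
  rw [setIntegral_congr_fun measurableSet_Ioo fun u hu ↦ heven hu,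
    MeasureTheory.integral_const_mul, integral_hyp2F1_mul_betaWeight_upper hc ha
      (summable_gaussCoeff_mul_pow_of_norm_lt_one _ _ _ hz)]
  ring

theorem posPowIntegral_add_posPowIntegral_neg {a c : ℂ} (ha : 0 < a.re) (hc : 0 < c.re) {y : ℝ}
    (hy : |y| < 1) :
    posPowIntegral a c y + posPowIntegral a c (-y) =
      Complex.betaIntegral c a * hyp2F1 (-c + 1 / 2) (-a - c + 1) (1 / 2) ((y : ℂ) ^ 2) := by
  have hy' : |-y| < 1 := by rwa [abs_neg]
  have hz : ‖(y : ℂ) ^ 2‖ < 1 := by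
    simpa using pow_lt_one₀ (abs_nonneg y) hy two_ne_zero
  have hhalf : 0 < (1 / 2 : ℂ).re := by norm_num
  have heuler := one_sub_cpow_mul_hyp2F1 (a + c - 1 / 2) c (ne_neg_natCast_of_re_pos hhalf) hz
  rw [show a + c - 1 / 2 + c - 1 / 2 = a + 2 * c - 1 by ring,
    show 1 / 2 - (a + c - 1 / 2) = -a - c + 1 by ring, hyp2F1_swap (-a - c + 1),
    show 1 / 2 - c = -c + 1 / 2 by ring] at heuler
  rw [posPowIntegral_eq_integral_betaWeight a c hy, posPowIntegral_eq_integral_betaWeight a c hy',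
    neg_sq, ← mul_add, ← MeasureTheory.integral_add
      (integrableOn_one_add_mul_cpow_mul_betaWeight ha hc _ hy)
      (integrableOn_one_add_mul_cpow_mul_betaWeight ha hc _ hy'),
    integral_one_add_mul_cpow_add_mul_betaWeight ha hc hy, ← heuler]
  push_cast
  ring

end TruncatedPowerIntegral

section DoubleIntegral

theorem norm_posPow_le {α : ℂ} (hα : 0 ≤ α.re) {y M : ℝ} (hyM : y ≤ M) (hM : 0 ≤ M) :
    ‖posPow y α‖ ≤ M ^ α.re := by
  unfold posPow
  split_ifs with hy
  · rw [Complex.norm_cpow_eq_rpow_re_of_pos hy]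
    exact Real.rpow_le_rpow hy.le hyM hα
  · rw [norm_zero]
    exact Real.rpow_nonneg hM _

theorem measurable_posPow (α : ℂ) : Measurable (posPow · α) :=
  Measurable.ite measurableSet_Ioi (by fun_prop) measurable_const

theorem intervalIntegral_eq_setIntegral_add_neg {E : Type*} [NormedAddCommGroup E]
    [NormedSpace ℝ E] {r : ℝ} (hr : 0 ≤ r) {f : ℝ → E} (hf : IntervalIntegrable f volume (-r) r) :
    ∫ t in (-r)..r, f t = ∫ t in Set.Ioo 0 r, (f t + f (-t)) := by
  have hmem : (0 : ℝ) ∈ Set.uIcc (-r) r := by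
    rw [Set.uIcc_of_le (neg_le_self hr)]
    exact ⟨neg_nonpos.mpr hr, hr⟩
  have hneg : IntervalIntegrable f volume (-r) 0 :=
    hf.mono_set (Set.uIcc_subset_uIcc_left hmem)
  have hpos : IntervalIntegrable f volume 0 r := hf.mono_set (Set.uIcc_subset_uIcc_right hmem)
  have hneg' : IntervalIntegrable (fun t ↦ f (-t)) volume 0 r := by
    simpa using ((IntervalIntegrable.iff_comp_neg).mp hneg).symm
  rw [← integral_Ioc_eq_integral_Ioo, ← intervalIntegral.integral_of_le hr,
    intervalIntegral.integral_add hpos hneg', intervalIntegral.integral_comp_neg, neg_zero,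
    add_comm, intervalIntegral.integral_add_adjacent_intervals hneg hpos]

theorem betaWeight_one_half (a : ℂ) :
    betaWeight (1 / 2) a = fun s ↦ ((1 - s ^ 2 : ℝ) : ℂ) ^ (a - 1) := by
  funext s
  rw [betaWeight, mul_one_div_cancel two_ne_zero, sub_self, Complex.cpow_zero, one_mul]

theorem integrableOn_one_sub_sq_cpow {a : ℂ} (ha : 0 < a.re) :
    IntegrableOn (fun s : ℝ ↦ ((1 - s ^ 2 : ℝ) : ℂ) ^ (a - 1)) (Set.Ioc (-1) 1) := by
  have hpos : IntervalIntegrable (fun s : ℝ ↦ ((1 - s ^ 2 : ℝ) : ℂ) ^ (a - 1)) volume 0 1 := by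
    rw [intervalIntegrable_iff_integrableOn_Ioo_of_le zero_le_one]
    simpa only [betaWeight_one_half] using integrableOn_betaWeight (c := 1 / 2) (by norm_num) ha
  have hneg : IntervalIntegrable (fun s : ℝ ↦ ((1 - s ^ 2 : ℝ) : ℂ) ^ (a - 1)) volume (-1) 0 := by
    rw [IntervalIntegrable.iff_comp_neg]
    simpa using hpos.symm
  exact (intervalIntegrable_iff_integrableOn_Ioc_of_le (by norm_num)).mp (hneg.trans hpos)

theorem integrable_posPow_mul_weights {a b α : ℂ} (ha : 0 < a.re) (hb : 0 < b.re)
    (hα : 0 ≤ α.re) (x : ℝ) :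
    Integrable (Function.uncurry fun s t : ℝ ↦ posPow (s - x * t) α *
        ((1 - s ^ 2 : ℝ) : ℂ) ^ (a - 1) * ((1 - t ^ 2 : ℝ) : ℂ) ^ (b - 1))
      ((volume.restrict (Set.Ioc (-1) 1)).prod (volume.restrict (Set.Ioc (-1) 1))) := by
  have hweights := (integrableOn_one_sub_sq_cpow ha).mul_prod (integrableOn_one_sub_sq_cpow hb)
  have hmeas : Measurable fun q : ℝ × ℝ ↦ posPow (q.1 - x * q.2) α :=
    (measurable_posPow α).comp (by fun_prop)
  have hbound : ∀ᵐ q : ℝ × ℝ ∂(volume.restrict (Set.Ioc (-1) 1)).prod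
      (volume.restrict (Set.Ioc (-1) 1)), ‖posPow (q.1 - x * q.2) α‖ ≤ (1 + |x|) ^ α.re := by
    rw [Measure.prod_restrict]
    filter_upwards [ae_restrict_mem (measurableSet_Ioc.prod measurableSet_Ioc)]
      with q ⟨⟨_, hs⟩, ht₀, ht₁⟩
    have hxt : |x * q.2| ≤ |x| := by
      rw [abs_mul]
      exact mul_le_of_le_one_right (abs_nonneg x) (abs_le.mpr ⟨ht₀.le, ht₁⟩)
    exact norm_posPow_le hα (by linarith [neg_le_of_abs_le hxt]) (by positivity)
  refine (hweights.bdd_mul hmeas.aestronglyMeasurable hbound).congr (.of_forall fun q ↦ ?_)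
  simp only [Function.uncurry, mul_assoc]

theorem integral_integral_posPow_eq {a b c : ℂ} (ha : 0 < a.re) (hb : 0 < b.re)
    (hc : 1 / 2 < c.re) (x : ℝ) :
    ∫ s in (-1 : ℝ)..1, ∫ t in (-1 : ℝ)..1, posPow (s - x * t) (2 * c - 1) *
        ((1 - s ^ 2 : ℝ) : ℂ) ^ (a - 1) * ((1 - t ^ 2 : ℝ) : ℂ) ^ (b - 1) =
      ∫ t in Set.Ioo (0 : ℝ) 1, (posPowIntegral a c (x * t) + posPowIntegral a c (-(x * t))) *
        betaWeight (1 / 2) b t := by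
  have hle : (-1 : ℝ) ≤ 1 := by norm_num
  have hα : 0 ≤ (2 * c - 1).re := by
    simp only [Complex.sub_re, Complex.mul_re, Complex.re_ofNat, Complex.im_ofNat, Complex.one_re]
    linarith
  have hint := integrable_posPow_mul_weights ha hb hα x
  have hinner (t : ℝ) : ∫ s in Set.Ioc (-1 : ℝ) 1, posPow (s - x * t) (2 * c - 1) *
      ((1 - s ^ 2 : ℝ) : ℂ) ^ (a - 1) * ((1 - t ^ 2 : ℝ) : ℂ) ^ (b - 1) =
      posPowIntegral a c (x * t) * ((1 - t ^ 2 : ℝ) : ℂ) ^ (b - 1) := by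
    rw [MeasureTheory.integral_mul_const, posPowIntegral, intervalIntegral.integral_of_le hle]
  have houter := hint.integral_prod_right
  simp only [Function.uncurry, hinner] at houter
  simp only [intervalIntegral.integral_of_le hle]
  rw [integral_integral_swap hint]
  simp only [hinner]
  rw [← intervalIntegral.integral_of_le hle, intervalIntegral_eq_setIntegral_add_neg zero_le_one
    ((intervalIntegrable_iff_integrableOn_Ioc_of_le hle).mpr houter)]
  simp only [betaWeight_one_half, mul_neg, neg_sq, add_mul]

theorem integral_posPowIntegral_mul_betaWeight {a b c : ℂ} (ha : 0 < a.re) (hb : 0 < b.re)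
    (hc : 0 < c.re) (hac : 1 < a.re + 2 * c.re) {x : ℝ} (hx : |x| ≤ 1) :
    ∫ t in Set.Ioo (0 : ℝ) 1, (posPowIntegral a c (x * t) + posPowIntegral a c (-(x * t))) *
        betaWeight (1 / 2) b t =
      Complex.betaIntegral c a * (Complex.betaIntegral (1 / 2) b / 2 *
        hyp2F1 (-c + 1 / 2) (-a - c + 1) (1 / 2 + b) ((x : ℂ) ^ 2)) := by
  have hsummable : Summable fun n ↦
      gaussCoeff (-c + 1 / 2) (-a - c + 1) (1 / 2) n * ((x : ℂ) ^ 2) ^ n := by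
    refine summable_gaussCoeff_mul_pow_of_norm_le_one ?_ (by simpa using hx)
    norm_num
    linarith
  rw [← integral_hyp2F1_mul_betaWeight_lower (by norm_num) hb hsummable,
    ← MeasureTheory.integral_const_mul]
  refine setIntegral_congr_fun measurableSet_Ioo fun t ht ↦ ?_
  have hxt : |x * t| < 1 := by
    rw [abs_mul, abs_of_pos ht.1]
    exact mul_lt_one_of_nonneg_of_lt_one_right hx ht.1.le ht.2
  simp only [posPowIntegral_add_posPowIntegral_neg ha hc hxt, Complex.ofReal_mul, mul_pow,
    mul_assoc]

end DoubleIntegral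

theorem stmt3 (a b c : ℂ) (ha : 0 < a.re) (hb : 0 < b.re) (hc : (1 / 2 : ℝ) < c.re)
    (x : ℝ) (hx : -1 ≤ x) (hx' : x ≤ 1) :
    (∫ s in (-1 : ℝ)..1, ∫ t in (-1 : ℝ)..1,
        posPow (s - x * t) (2 * c - 1) * ((1 - s ^ 2 : ℝ) : ℂ) ^ (a - 1) *
          ((1 - t ^ 2 : ℝ) : ℂ) ^ (b - 1)) =
      (Real.sqrt Real.pi : ℂ) * Complex.Gamma a * Complex.Gamma b * Complex.Gamma c /
          (2 * Complex.Gamma (a + c) * Complex.Gamma (b + 1 / 2)) *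
        hyp2F1 (-c + 1 / 2) (-a - c + 1) (b + 1 / 2) ((x : ℂ) ^ 2) := by
  have hc₀ : 0 < c.re := by linarith
  have hhalf : 0 < (1 / 2 : ℂ).re := by norm_num
  have hsqrt : Complex.Gamma (1 / 2) = (Real.sqrt Real.pi : ℂ) := by
    rw [Complex.Gamma_one_half_eq, Real.sqrt_eq_rpow, Complex.ofReal_cpow Real.pi_pos.le]
    norm_num
  rw [integral_integral_posPow_eq ha hb hc x,
    integral_posPowIntegral_mul_betaWeight ha hb hc₀ (by linarith) (abs_le.mpr ⟨hx, hx'⟩),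
    Complex.betaIntegral_eq_Gamma_mul_div _ _ hc₀ ha,
    Complex.betaIntegral_eq_Gamma_mul_div _ _ hhalf hb, hsqrt, add_comm c a, add_comm (1 / 2) b]
  ring
end
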